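/- arXiv:1905.12315 — 5 statements merged into one kernel-verified Lean document; each statement's English description precedes it below -/
import Mathlib

section
/- For a general source with side information, the minimum achievable coding rates coincide whether or not the encoder can access the side information: R_A = R_B, and likewise R*_A = R*_B. -/
open MeasureTheory Filter Topology
open scoped ENNReal

noncomputable section

/-- An `A`-code: the encoder has access to the side information. -/
structure ACode (X1 X2 : Type) where
  M : ℕ
  hM : 1 ≤ M
  enc : X1 × X2 → Fin M
  dec : Fin M × X2 → X1

/-- The composite map of an `A`-code. -/
def ACode.map {X1 X2 : Type} (c : ACode X1 X2) (p : X1 × X2) : X1 :=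
  c.dec (c.enc p, p.2)

/-- The set of correctly decoded pairs for an `A`-code. -/
def ACode.T {X1 X2 : Type} (c : ACode X1 X2) : Set (X1 × X2) :=
  {p | c.map p = p.1}

/-- A `B`-code: the encoder has no access to the side information. -/
structure BCode (X1 X2 : Type) where
  M : ℕ
  hM : 1 ≤ M
  enc : X1 → Fin M
  dec : Fin M × X2 → X1

/-- The composite map of a `B`-code. -/
def BCode.map {X1 X2 : Type} (c : BCode X1 X2) (p : X1 × X2) : X1 :=
  c.dec (c.enc p.1, p.2)

/-- The set of correctly decoded pairs for a `B`-code. -/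
def BCode.T {X1 X2 : Type} (c : BCode X1 X2) : Set (X1 × X2) :=
  {p | c.map p = p.1}

/-- Rate of a sequence of `A`-codes. -/
def rateA {X1 X2 : ℕ → Type} (c : ∀ n, ACode (X1 n) (X2 n)) : EReal :=
  Filter.limsup (fun n : ℕ => (((n : ℝ)⁻¹ * Real.log ((c n).M : ℝ) : ℝ) : EReal))
    Filter.atTop

/-- Rate of a sequence of `B`-codes. -/
def rateB {X1 X2 : ℕ → Type} (c : ∀ n, BCode (X1 n) (X2 n)) : EReal :=
  Filter.limsup (fun n : ℕ => (((n : ℝ)⁻¹ * Real.log ((c n).M : ℝ) : ℝ) : EReal))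
    Filter.atTop

/-- `R_A`: minimum `A`-achievable coding rate. -/
def RA {X1 X2 : ℕ → Type} [∀ n, MeasurableSpace (X1 n)] [∀ n, MeasurableSpace (X2 n)]
    (μ : ∀ n, Measure (X1 n × X2 n)) : EReal :=
  ⨅ (c : ∀ n, ACode (X1 n) (X2 n))
    (_ : Filter.Tendsto (fun n => μ n ((c n).T)ᶜ) Filter.atTop (nhds 0)), rateA c

/-- `R_B`: minimum `B`-achievable coding rate. -/
def RB {X1 X2 : ℕ → Type} [∀ n, MeasurableSpace (X1 n)] [∀ n, MeasurableSpace (X2 n)]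
    (μ : ∀ n, Measure (X1 n × X2 n)) : EReal :=
  ⨅ (c : ∀ n, BCode (X1 n) (X2 n))
    (_ : Filter.Tendsto (fun n => μ n ((c n).T)ᶜ) Filter.atTop (nhds 0)), rateB c

/-- `R*_A`: minimum `A*`-achievable coding rate. -/
def RAStar {X1 X2 : ℕ → Type} [∀ n, MeasurableSpace (X1 n)] [∀ n, MeasurableSpace (X2 n)]
    (μ : ∀ n, Measure (X1 n × X2 n)) : EReal :=
  ⨅ (c : ∀ n, ACode (X1 n) (X2 n))
    (_ : Filter.liminf (fun n => μ n ((c n).T)ᶜ) Filter.atTop < 1), rateA c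

/-- `R*_B`: minimum `B*`-achievable coding rate. -/
def RBStar {X1 X2 : ℕ → Type} [∀ n, MeasurableSpace (X1 n)] [∀ n, MeasurableSpace (X2 n)]
    (μ : ∀ n, Measure (X1 n × X2 n)) : EReal :=
  ⨅ (c : ∀ n, BCode (X1 n) (X2 n))
    (_ : Filter.liminf (fun n => μ n ((c n).T)ᶜ) Filter.atTop < 1), rateB c

/- Given the side information, a correctly decoded source word lies in a list of at most `M`
candidates. An encoder that hashes the source words at random separates a given word from the other
candidates except with probability about (list size) / (number of hash values), so a hash with
`K * M` values loses at most `1 / K` in probability. With `K = n + 1` the loss vanishes while the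
number of messages grows only subexponentially.

The singletons of `X1 n` need not be measurable. An individual source word is then not an event,
and the averaging is done over the atoms of its σ-algebra instead: atoms are hashed, and the
position inside the atom is transmitted as well. Sorting the atoms by size up to a factor of two
keeps the total at most `2 * K * M` messages for each of the `log₂ M + 1` sizes, because a list
contains at most `M / 2 ^ k` atoms of size at least `2 ^ k`. -/

section RandomBinning

variable {α β γ : Type*}

/-- The points `(a, b)` of `S` whose first coordinate cannot be recovered from the bin `h a` and
`b`: some other element of the list `{a' | (a', b) ∈ S}` lies in the same bin. -/
def collisionSet (S : Set (α × β)) (h : α → γ) : Set (α × β) :=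
  {p ∈ S | ∃ a, (a, p.2) ∈ S ∧ a ≠ p.1 ∧ h a = h p.1}

lemma collisionSet_subset (S : Set (α × β)) (h : α → γ) : collisionSet S h ⊆ S :=
  fun _ hp => hp.1

lemma exists_mul_measure_le_of_forall_mul_ncard_le {Ω ι : Type*} [MeasurableSpace Ω] [Finite ι]
    [Nonempty ι] (ν : Measure Ω) {B : ι → Set Ω} (hB : ∀ i, MeasurableSet (B i)) {K : ℕ}
    (hK : ∀ ω, K * {i | ω ∈ B i}.ncard ≤ Nat.card ι) : ∃ i, K * ν (B i) ≤ ν Set.univ := by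
  classical
  have := Fintype.ofFinite ι
  have sum_indicator_le (ω : Ω) :
      ∑ i, (B i).indicator (fun _ => (K : ℝ≥0∞)) ω ≤ Fintype.card ι := by
    have hω := hK ω
    rw [Set.ncard_eq_toFinset_card', Nat.card_eq_fintype_card, Set.toFinset_ofPred] at hω
    simp only [Set.indicator_apply, ← Finset.sum_filter, Finset.sum_const, nsmul_eq_mul]
    exact_mod_cast (mul_comm _ _).trans_le hω
  have sum_measure_le : ∑ i, K * ν (B i) ≤ ∑ _i : ι, ν Set.univ := by
    calc ∑ i, K * ν (B i) = ∑ i, ∫⁻ ω, (B i).indicator (fun _ => (K : ℝ≥0∞)) ω ∂ν := by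
          simp only [lintegral_indicator_const (hB _)]
      _ = ∫⁻ ω, ∑ i, (B i).indicator (fun _ => (K : ℝ≥0∞)) ω ∂ν :=
          (lintegral_finsetSum _ fun i _ => measurable_const.indicator (hB i)).symm
      _ ≤ ∫⁻ _, Fintype.card ι ∂ν := lintegral_mono sum_indicator_le
      _ = ∑ _i : ι, ν Set.univ := by simp
  obtain ⟨i, -, hi⟩ := ENNReal.exists_le_of_sum_le Finset.univ_nonempty sum_measure_le
  exact ⟨i, hi⟩

lemma ncard_setOf_apply_eq_mul_card_le [Finite α] [Finite γ] {a a' : α} (ha : a ≠ a') :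
    {h : α → γ | h a = h a'}.ncard * Nat.card γ ≤ Nat.card (α → γ) := by
  classical
  rw [← Set.ncard_univ γ, ← Set.ncard_prod, ← Set.ncard_univ (α → γ)]
  refine Set.ncard_le_ncard_of_injOn (fun q => Function.update q.1 a q.2)
    (fun _ _ => Set.mem_univ _) ?_
  rintro ⟨h, t⟩ ⟨hh, -⟩ ⟨h', t'⟩ ⟨hh', -⟩ heq
  have eq_of_ne (b : α) (hb : b ≠ a) : h b = h' b := by
    simpa only [Function.update_of_ne hb] using congrFun heq b
  have ht : t = t' := by simpa only [Function.update_self] using congrFun heq a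
  have hha : h a = h' a := by
    rw [show h a = h a' from hh, show h' a = h' a' from hh', eq_of_ne a' ha.symm]
  refine Prod.ext (funext fun b => ?_) ht
  rcases eq_or_ne b a with rfl | hb
  exacts [hha, eq_of_ne b hb]

lemma ncard_setOf_exists_apply_eq_mul_card_le [Finite α] [Finite γ] (s : Set α) (a : α) :
    {h : α → γ | ∃ a' ∈ s, a' ≠ a ∧ h a' = h a}.ncard * Nat.card γ ≤
      s.ncard * Nat.card (α → γ) := by
  classical
  have := Fintype.ofFinite α
  have subset_biUnion : {h : α → γ | ∃ a' ∈ s, a' ≠ a ∧ h a' = h a} ⊆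
      ⋃ a' ∈ {a' ∈ s | a' ≠ a}.toFinset, {h | h a' = h a} := by
    rintro h ⟨a', hs, hne, heq⟩
    exact Set.mem_biUnion (Set.mem_toFinset.2 ⟨hs, hne⟩) heq
  calc {h : α → γ | ∃ a' ∈ s, a' ≠ a ∧ h a' = h a}.ncard * Nat.card γ
      ≤ (∑ a' ∈ {a' ∈ s | a' ≠ a}.toFinset, {h : α → γ | h a' = h a}.ncard) * Nat.card γ :=
        Nat.mul_le_mul_right _ <|
          (Set.ncard_le_ncard subset_biUnion).trans (Finset.set_ncard_biUnion_le _ _)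
    _ ≤ {a' ∈ s | a' ≠ a}.toFinset.card * Nat.card (α → γ) := by
        rw [Finset.sum_mul, ← smul_eq_mul]
        refine Finset.sum_le_card_nsmul _ _ _ fun a' ha' => ?_
        exact ncard_setOf_apply_eq_mul_card_le (Set.mem_toFinset.1 ha').2
    _ ≤ s.ncard * Nat.card (α → γ) := by
        rw [← Set.ncard_eq_toFinset_card']
        exact Nat.mul_le_mul_right _ (Set.ncard_le_ncard fun _ ha' => ha'.1)

variable [MeasurableSpace α] [MeasurableSpace β] [DiscreteMeasurableSpace (α × β)]

/- A uniformly random `h` puts a fixed point of `S` into the collision set with probability at most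
(list size) / (number of bins), so some `h` does no worse on average over `S`. -/
lemma exists_mul_measure_collisionSet_le [Finite α] [Finite γ] [Nonempty γ]
    (ν : Measure (α × β)) {S : Set (α × β)} {K : ℕ}
    (hS : ∀ b, K * {a | (a, b) ∈ S}.ncard ≤ Nat.card γ) :
    ∃ h : α → γ, K * ν (collisionSet S h) ≤ ν S := by
  have card_collision_le (p : α × β) :
      K * {h : α → γ | p ∈ collisionSet S h}.ncard ≤ Nat.card (α → γ) := by
    refine Nat.le_of_mul_le_mul_right ?_ (Nat.card_pos (α := γ))
    calc K * {h : α → γ | p ∈ collisionSet S h}.ncard * Nat.card γ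
        ≤ K * ({h : α → γ | ∃ a ∈ {a | (a, p.2) ∈ S}, a ≠ p.1 ∧ h a = h p.1}.ncard
            * Nat.card γ) := by
          rw [mul_assoc]
          gcongr
          exacts [Set.toFinite _, And.right]
      _ ≤ K * ({a | (a, p.2) ∈ S}.ncard * Nat.card (α → γ)) :=
          Nat.mul_le_mul_left _ (ncard_setOf_exists_apply_eq_mul_card_le _ _)
      _ = K * {a | (a, p.2) ∈ S}.ncard * Nat.card (α → γ) := (mul_assoc _ _ _).symm
      _ ≤ Nat.card γ * Nat.card (α → γ) := Nat.mul_le_mul_right _ (hS p.2)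
      _ = Nat.card (α → γ) * Nat.card γ := mul_comm _ _
  obtain ⟨h, hh⟩ := exists_mul_measure_le_of_forall_mul_ncard_le (ν.restrict S)
    (fun h => .of_discrete (s := collisionSet S h)) card_collision_le
  rw [Measure.restrict_eq_self ν (collisionSet_subset S h), Measure.restrict_apply_univ] at hh
  exact ⟨h, hh⟩

lemma exists_mul_measure_iUnion_collisionSet_le {κ : Type*} [Finite κ] [Finite α] {γ : κ → Type*}
    [∀ k, Finite (γ k)] [∀ k, Nonempty (γ k)] (ν : Measure (α × β)) {S : Set (α × β)}
    (cls : α → κ) {K : ℕ}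
    (hS : ∀ k b, K * {a | (a, b) ∈ S ∧ cls a = k}.ncard ≤ Nat.card (γ k)) :
    ∃ h : ∀ k, α → γ k,
      K * ν (⋃ k, collisionSet {p ∈ S | cls p.1 = k} (h k)) ≤ ν S := by
  have := Fintype.ofFinite κ
  choose h hh using fun k =>
    exists_mul_measure_collisionSet_le ν (S := {p ∈ S | cls p.1 = k}) (hS k)
  have disjoint_classes :
      Pairwise (Function.onFun Disjoint fun k => {p ∈ S | cls p.1 = k}) :=
    fun k l hkl => Set.disjoint_left.2 fun _ hk hl => hkl (hk.2.symm.trans hl.2)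
  refine ⟨h, ?_⟩
  calc K * ν (⋃ k, collisionSet {p ∈ S | cls p.1 = k} (h k))
      ≤ ∑ k, K * ν (collisionSet {p ∈ S | cls p.1 = k} (h k)) := by
        rw [← Finset.mul_sum]
        gcongr
        exact measure_iUnion_fintype_le ν _
    _ ≤ ∑ k, ν {p ∈ S | cls p.1 = k} := Finset.sum_le_sum fun k _ => hh k
    _ = ν (⋃ k, {p ∈ S | cls p.1 = k}) := by
        rw [measure_iUnion disjoint_classes fun _ => .of_discrete, tsum_fintype]
    _ ≤ ν S := measure_mono (Set.iUnion_subset fun _ _ hp => hp.1)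

end RandomBinning

section Encoders

variable {X Y : Type*}

lemma ncard_mul_le_of_pairwiseDisjoint {α : Type*} [Finite α] {𝒜 : Set (Set α)} {U : Set α} {m : ℕ}
    (hdisj : 𝒜.PairwiseDisjoint id) (hU : ∀ A ∈ 𝒜, A ⊆ U) (hm : ∀ A ∈ 𝒜, m ≤ A.ncard) :
    𝒜.ncard * m ≤ U.ncard := by
  classical
  have := Fintype.ofFinite α
  calc 𝒜.ncard * m = ∑ _A ∈ 𝒜.toFinset, m := by
        rw [Finset.sum_const, Set.ncard_eq_toFinset_card', smul_eq_mul]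
    _ ≤ ∑ A ∈ 𝒜.toFinset, A.ncard := Finset.sum_le_sum fun A hA => hm A (Set.mem_toFinset.1 hA)
    _ = (⋃ A ∈ 𝒜, A).ncard := by
        rw [← finsum_mem_eq_toFinset_sum]
        exact ((Set.toFinite 𝒜).ncard_biUnion (fun _ _ => Set.toFinite _) hdisj).symm
    _ ≤ U.ncard := Set.ncard_le_ncard (Set.iUnion₂_subset hU)

/-- The integer part of `log₂` of the size of `A`, as one of the classes `0, …, m`; larger values
wrap around modulo `m + 1`. -/
def sizeClass (m : ℕ) (A : Set X) : Fin (m + 1) :=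
  Fin.ofNat (m + 1) (Nat.log 2 A.ncard)

lemma two_pow_sizeClass_le_ncard (m : ℕ) {A : Set X} (hA : A.ncard ≠ 0) :
    2 ^ (sizeClass m A : ℕ) ≤ A.ncard :=
  (Nat.pow_le_pow_right two_pos (Nat.mod_le _ _)).trans (Nat.pow_log_le_self 2 hA)

lemma ncard_lt_two_pow_sizeClass_add_one {M : ℕ} {A : Set X} (hA : A.ncard ≤ M) :
    A.ncard < 2 ^ ((sizeClass (Nat.log 2 M) A : ℕ) + 1) := by
  have hlog : (sizeClass (Nat.log 2 M) A : ℕ) = Nat.log 2 A.ncard :=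
    Nat.mod_eq_of_lt (Nat.lt_succ_of_le (Nat.log_mono_right hA))
  rw [hlog]
  exact Nat.lt_pow_succ_log_self one_lt_two _

lemma measurable_measurableAtom [MeasurableSpace X] [Countable X] :
    Measurable (measurableAtom : X → Set X) := by
  refine measurable_set_iff.2 fun a => ?_
  have mem_comm (x : X) : a ∈ measurableAtom x ↔ x ∈ measurableAtom a :=
    ⟨fun ha => measurableAtom_eq_of_mem ha ▸ mem_measurableAtom_self x,
      fun hx => measurableAtom_eq_of_mem hx ▸ mem_measurableAtom_self a⟩
  simp only [mem_comm]
  exact (MeasurableSet.measurableAtom_of_countable a).mem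

lemma measurable_slice [MeasurableSpace X] [MeasurableSpace Y] {G : Set (X × Y)}
    (hG : MeasurableSet G) : Measurable fun y => {x | (x, y) ∈ G} :=
  measurable_set_iff.2 fun _ => (measurable_prodMk_left hG).mem

lemma pairwiseDisjoint_range_measurableAtom [MeasurableSpace X] :
    (Set.range (measurableAtom : X → Set X)).PairwiseDisjoint id := by
  rintro _ ⟨x, rfl⟩ _ ⟨y, rfl⟩ hxy
  exact disjoint_measurableAtom_of_notMem fun hx => hxy (measurableAtom_eq_of_mem hx)

lemma ncard_sizeClass_atoms_le [MeasurableSpace X] [Finite X] {M m : ℕ} {U : Set X}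
    (hU : U.ncard ≤ M) (k : Fin (m + 1)) :
    {A ∈ Set.range (measurableAtom : X → Set X) | A ⊆ U ∧ sizeClass m A = k}.ncard ≤
      M / 2 ^ (k : ℕ) := by
  rw [Nat.le_div_iff_mul_le (by positivity)]
  refine (ncard_mul_le_of_pairwiseDisjoint (U := U) ?_ (fun A hA => hA.2.1) ?_).trans hU
  · exact pairwiseDisjoint_range_measurableAtom.subset (Set.sep_subset _ _)
  · rintro _ ⟨⟨x, rfl⟩, -, rfl⟩
    exact two_pow_sizeClass_le_ncard m
      (Set.ncard_ne_zero_of_mem (mem_measurableAtom_self x) (Set.toFinite _))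

/-- The pairs `(A, U)` of an atom `A` of the σ-algebra of `X` and a set `U ⊇ A` with at most `M`
elements: `U` is the list of candidates left by the side information. -/
def atomsOfSmallSets [MeasurableSpace X] (M : ℕ) : Set (Set X × Set X) :=
  {p | p.1 ∈ Set.range (measurableAtom : X → Set X) ∧ p.1 ⊆ p.2 ∧ p.2.ncard ≤ M}

lemma exists_atomHash [MeasurableSpace X] [Finite X] (ν : Measure (Set X × Set X)) {M K : ℕ}
    (hM : M ≠ 0) (hK : K ≠ 0) :
    ∃ h : ∀ k : Fin (Nat.log 2 M + 1), Set X → Fin (K * (M / 2 ^ (k : ℕ))),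
      K * ν (⋃ k, collisionSet
        {p ∈ atomsOfSmallSets M | sizeClass (Nat.log 2 M) p.1 = k} (h k)) ≤ ν Set.univ := by
  have div_pos (k : Fin (Nat.log 2 M + 1)) : 0 < M / 2 ^ (k : ℕ) :=
    Nat.div_pos ((Nat.pow_le_pow_right two_pos (Nat.lt_succ_iff.1 k.2)).trans
      (Nat.pow_log_le_self 2 hM)) (by positivity)
  have (k : Fin (Nat.log 2 M + 1)) : Nonempty (Fin (K * (M / 2 ^ (k : ℕ)))) :=
    Fin.pos_iff_nonempty.1 (Nat.mul_pos (Nat.pos_of_ne_zero hK) (div_pos k))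
  have list_card_le (k : Fin (Nat.log 2 M + 1)) (U : Set X) :
      K * {A | (A, U) ∈ atomsOfSmallSets M ∧ sizeClass (Nat.log 2 M) A = k}.ncard ≤
        Nat.card (Fin (K * (M / 2 ^ (k : ℕ)))) := by
    rw [Nat.card_eq_fintype_card, Fintype.card_fin]
    refine Nat.mul_le_mul_left _ ?_
    by_cases hU : U.ncard ≤ M
    · refine le_trans (Set.ncard_le_ncard ?_) (ncard_sizeClass_atoms_le hU k)
      exact fun A hA => ⟨hA.1.1, hA.1.2.1, hA.2⟩
    · simp [atomsOfSmallSets, hU]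
  obtain ⟨h, hh⟩ := exists_mul_measure_iUnion_collisionSet_le ν _ list_card_le
  exact ⟨h, hh.trans (measure_mono (Set.subset_univ _))⟩

lemma exists_injOn_fin {A : Set X} (hA : A.Finite) {n : ℕ} [NeZero n] (hn : A.ncard ≤ n) :
    ∃ label : X → Fin n, Set.InjOn label A := by
  have hle : A.encard ≤ (Set.univ : Set (Fin n)).encard := by
    rw [← hA.cast_ncard_eq, Set.encard_univ, ENat.card_eq_coe_fintype_card, Fintype.card_fin]
    exact_mod_cast hn
  obtain ⟨label, -, hlabel⟩ := hA.exists_injOn_of_encard_le hle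
  exact ⟨label, hlabel⟩

/- A class-`k` element is encoded by its class, a label inside its cell (`2 ^ (k + 1)` values) and
the bin of its cell (`K * (M / 2 ^ k)` values). -/
lemma exists_encoder_of_cellHash [Finite X] {M K : ℕ} {cell : X → Set X} (hcell : ∀ x, x ∈ cell x)
    (h : ∀ k : Fin (Nat.log 2 M + 1), Set X → Fin (K * (M / 2 ^ (k : ℕ)))) :
    ∃ enc : X → Fin (Nat.log 2 M + 1) × Fin (2 * K * M), ∀ x x', (cell x).ncard ≤ M →
      enc x' = enc x → x' ≠ x → cell x' ≠ cell x ∧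
        ∃ k, sizeClass _ (cell x') = k ∧ sizeClass _ (cell x) = k ∧
          h k (cell x') = h k (cell x) := by
  have exists_pairing (k : Fin (Nat.log 2 M + 1)) :
      Nonempty (Fin (2 ^ ((k : ℕ) + 1)) × Fin (K * (M / 2 ^ (k : ℕ))) ↪ Fin (2 * K * M)) := by
    refine Function.Embedding.nonempty_of_card_le ?_
    simp only [Fintype.card_prod, Fintype.card_fin]
    calc 2 ^ ((k : ℕ) + 1) * (K * (M / 2 ^ (k : ℕ)))
        = 2 * K * (2 ^ (k : ℕ) * (M / 2 ^ (k : ℕ))) := by ring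
      _ ≤ 2 * K * M := Nat.mul_le_mul_left _ (Nat.mul_div_le _ _)
  have exists_label (k : ℕ) (A : Set X) :
      ∃ label : X → Fin (2 ^ (k + 1)), A.ncard ≤ 2 ^ (k + 1) → Set.InjOn label A := by
    by_cases hA : A.ncard ≤ 2 ^ (k + 1)
    · exact (exists_injOn_fin A.toFinite hA).imp fun _ hl _ => hl
    · exact ⟨fun _ => 0, fun hA' => absurd hA' hA⟩
  choose label hlabel using exists_label
  let pair k := (exists_pairing k).some
  refine ⟨fun x => (sizeClass _ (cell x), pair (sizeClass _ (cell x))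
    (label _ (cell x) x, h _ (cell x))), fun x x' hM heq hne => ?_⟩
  obtain ⟨hclass, hpair⟩ := Prod.mk.inj heq
  rw [hclass] at hpair
  obtain ⟨hlab, hhash⟩ := Prod.mk.inj ((pair _).injective hpair)
  refine ⟨fun hc => hne ?_, _, hclass, rfl, hhash⟩
  rw [hc] at hlab
  exact hlabel _ _ (ncard_lt_two_pow_sizeClass_add_one hM).le (hc ▸ hcell x') (hcell x) hlab

lemma exists_encoder_mul_measure_collisionSet_le [Finite X] [MeasurableSpace X]
    [MeasurableSpace Y] (μ : Measure (X × Y)) {G : Set (X × Y)} (hG : MeasurableSet G) {M K : ℕ}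
    (hM : M ≠ 0) (hK : K ≠ 0) (hslice : ∀ y, {x | (x, y) ∈ G}.ncard ≤ M) :
    ∃ enc : X → Fin (Nat.log 2 M + 1) × Fin (2 * K * M),
      K * μ (collisionSet G enc) ≤ μ Set.univ := by
  let q : X × Y → Set X × Set X := fun p => (measurableAtom p.1, {x | (x, p.2) ∈ G})
  have hq : Measurable q := (measurable_measurableAtom.comp measurable_fst).prodMk
    ((measurable_slice hG).comp measurable_snd)
  have atom_subset_slice {x y} (hx : (x, y) ∈ G) : measurableAtom x ⊆ {x | (x, y) ∈ G} :=
    measurableAtom_subset (measurable_prodMk_right hG) hx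
  obtain ⟨h, hh⟩ := exists_atomHash (μ.map q) hM hK
  obtain ⟨enc, henc⟩ := exists_encoder_of_cellHash (mem_measurableAtom_self (β := X)) h
  have collision_subset : collisionSet G enc ⊆ q ⁻¹' ⋃ k, collisionSet
        {p ∈ atomsOfSmallSets M | sizeClass (Nat.log 2 M) p.1 = k} (h k) := by
    rintro ⟨x, y⟩ ⟨hx, x', hx', hne, heq⟩
    have hatom := (Set.ncard_le_ncard (atom_subset_slice hx)).trans (hslice y)
    obtain ⟨hcell, k, hclass', hclass, hhash⟩ := henc x x' hatom heq hne
    exact Set.mem_iUnion.2 ⟨k, ⟨⟨⟨x, rfl⟩, atom_subset_slice hx, hslice y⟩, hclass⟩,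
      measurableAtom x', ⟨⟨⟨x', rfl⟩, atom_subset_slice hx', hslice y⟩, hclass'⟩, hcell, hhash⟩
  refine ⟨enc, ?_⟩
  rw [Measure.map_apply hq .of_discrete, Measure.map_apply hq .univ] at hh
  exact (mul_le_mul_right (measure_mono collision_subset) _).trans hh

end Encoders

section Codes

variable {X Y : Type}

lemma ACode.ncard_slice_T_le (c : ACode X Y) (y : Y) : {x | (x, y) ∈ c.T}.ncard ≤ c.M := by
  have enc_injOn : Set.InjOn (fun x => c.enc (x, y)) {x | (x, y) ∈ c.T} := by
    intro x hx x' hx' heq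
    rw [← show c.dec (c.enc (x, y), y) = x from hx, ← show c.dec (c.enc (x', y), y) = x' from hx']
    exact congrArg (fun i => c.dec (i, y)) heq
  simpa only [Set.ncard_univ, Nat.card_eq_fintype_card, Fintype.card_fin] using
    Set.ncard_le_ncard_of_injOn _ (fun _ _ => Set.mem_univ _) enc_injOn

/-- The `A`-code that ignores the side information at the encoder. -/
def BCode.toACode (b : BCode X Y) : ACode X Y where
  M := b.M
  hM := b.hM
  enc p := b.enc p.1
  dec := b.dec

/-- The `B`-code with encoder `enc` whose decoder, given a message and the side information `y`,
outputs some source word with that message on the list `{x | (x, y) ∈ G}`. -/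
def BCode.binning {N : Type*} [Fintype N] [Nonempty X] (enc : X → N) (G : Set (X × Y)) :
    BCode X Y where
  M := Fintype.card N
  hM := Fintype.card_pos_iff.2 (‹Nonempty X›.map enc)
  enc x := Fintype.equivFin N (enc x)
  dec q := Classical.epsilon fun x => (x, q.2) ∈ G ∧ enc x = (Fintype.equivFin N).symm q.1

lemma BCode.compl_binning_T_subset {N : Type*} [Fintype N] [Nonempty X] (enc : X → N)
    (G : Set (X × Y)) : (BCode.binning enc G).Tᶜ ⊆ Gᶜ ∪ collisionSet G enc := by
  rintro ⟨x, y⟩ hT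
  by_contra! hxy
  obtain ⟨hG, hcollision⟩ := not_or.1 hxy
  rw [Set.notMem_compl_iff] at hG
  set x' := (BCode.binning enc G).map (x, y) with hx'
  have hdec : (x', y) ∈ G ∧ enc x' = enc x := by
    have := Classical.epsilon_spec (p := fun a => (a, y) ∈ G ∧ enc a = enc x) ⟨x, hG, rfl⟩
    simpa [hx', BCode.map, BCode.binning] using this
  exact hcollision ⟨hG, x', hdec.1, hT, hdec.2⟩

lemma ACode.exists_bCode [Finite X] [Nonempty X] [MeasurableSpace X] [MeasurableSpace Y]
    (μ : Measure (X × Y)) (c : ACode X Y) {K : ℕ} (hK : K ≠ 0) :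
    ∃ b : BCode X Y, b.M = (Nat.log 2 c.M + 1) * (2 * K * c.M) ∧
      μ b.Tᶜ ≤ μ c.Tᶜ + μ Set.univ / K := by
  set G : Set (X × Y) := (toMeasurable μ c.Tᶜ)ᶜ
  have hGT : G ⊆ c.T := Set.compl_subset_comm.1 (subset_toMeasurable μ c.Tᶜ)
  have hG : MeasurableSet G := (measurableSet_toMeasurable μ _).compl
  have hslice (y : Y) : {x | (x, y) ∈ G}.ncard ≤ c.M :=
    (Set.ncard_le_ncard (t := {x | (x, y) ∈ c.T}) fun _ hx => hGT hx).trans (c.ncard_slice_T_le y)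
  obtain ⟨enc, henc⟩ := exists_encoder_mul_measure_collisionSet_le μ hG
    (Nat.one_le_iff_ne_zero.1 c.hM) hK hslice
  refine ⟨BCode.binning enc G, by simp [BCode.binning], ?_⟩
  calc μ (BCode.binning enc G).Tᶜ ≤ μ Gᶜ + μ (collisionSet G enc) :=
        (measure_mono (BCode.compl_binning_T_subset enc G)).trans (measure_union_le _ _)
    _ ≤ μ c.Tᶜ + μ Set.univ / K := by
        rw [compl_compl, measure_toMeasurable]
        gcongr
        exact (ENNReal.le_div_iff_mul_le (by simp [hK]) (by simp)).2 ((mul_comm _ _).trans_le henc)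

end Codes

section Rates

/-- The exponential growth rate `limsup (1 / n) log (M n)` of a sequence of code sizes. -/
def exponentialRate (M : ℕ → ℕ) : EReal :=
  limsup (fun n : ℕ => (((n : ℝ)⁻¹ * Real.log (M n) : ℝ) : EReal)) atTop

lemma exponentialRate_le_of_le_mul {a b : ℕ → ℕ} {p : ℕ → ℝ} (hb : ∀ n, b n ≠ 0)
    (ha : ∀ n, a n ≠ 0) (hp : Tendsto (fun n : ℕ => (n : ℝ)⁻¹ * Real.log (p n)) atTop (𝓝 0))
    (hle : ∀ᶠ n in atTop, (b n : ℝ) ≤ p n * a n) : exponentialRate b ≤ exponentialRate a := by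
  have limsup_overhead :
      limsup (fun n : ℕ => (((n : ℝ)⁻¹ * Real.log (p n) : ℝ) : EReal)) atTop = 0 :=
    ((continuous_coe_real_ereal.tendsto 0).comp hp).limsup_eq
  have log_le : ∀ᶠ n : ℕ in atTop, (((n : ℝ)⁻¹ * Real.log (b n) : ℝ) : EReal) ≤
      (((n : ℝ)⁻¹ * Real.log (p n) : ℝ) : EReal) + (((n : ℝ)⁻¹ * Real.log (a n) : ℝ) : EReal) := by
    filter_upwards [hle] with n hn
    have hb_pos : 0 < (b n : ℝ) := by exact_mod_cast Nat.pos_of_ne_zero (hb n)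
    have ha_pos : 0 < (a n : ℝ) := by exact_mod_cast Nat.pos_of_ne_zero (ha n)
    have hp_pos : 0 < p n := pos_of_mul_pos_left (hb_pos.trans_le hn) ha_pos.le
    rw [← EReal.coe_add, EReal.coe_le_coe_iff, ← mul_add, ← Real.log_mul hp_pos.ne' ha_pos.ne']
    gcongr
  calc exponentialRate b ≤ _ := limsup_le_limsup log_le
    _ ≤ _ + exponentialRate a := EReal.limsup_add_le
        (.inl (by rw [limsup_overhead]; simp)) (.inl (by rw [limsup_overhead]; simp))
    _ = exponentialRate a := by rw [limsup_overhead, zero_add]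

lemma tendsto_inv_mul_log_mul_add_one_sq {C : ℝ} (hC : C ≠ 0) :
    Tendsto (fun n : ℕ => (n : ℝ)⁻¹ * Real.log (C * (n + 1) ^ 2)) atTop (𝓝 0) := by
  have log_succ_div : Tendsto (fun n : ℕ => Real.log ((n : ℝ) + 1) / n) atTop (𝓝 0) := by
    have := (Real.tendsto_pow_log_div_mul_add_atTop 1 (-1) 1 one_ne_zero).comp
      (tendsto_atTop_add_const_right atTop (1 : ℝ) tendsto_natCast_atTop_atTop)
    simpa [Function.comp_def] using this
  have const_div : Tendsto (fun n : ℕ => Real.log C / (n : ℝ)) atTop (𝓝 0) :=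
    tendsto_const_nhds.div_atTop tendsto_natCast_atTop_atTop
  convert const_div.add (log_succ_div.const_mul 2) using 2 with n
  · rw [Real.log_mul hC (by positivity), Real.log_pow]
    push_cast
    ring
  · simp

lemma exists_eventually_natLog_add_one_le {a : ℕ → ℕ} (ha : exponentialRate a < ⊤) :
    ∃ C : ℝ, 0 < C ∧ ∀ᶠ n : ℕ in atTop, (Nat.log 2 (a n) : ℝ) + 1 ≤ C * (n + 1) := by
  obtain ⟨r, hr, -⟩ := EReal.lt_iff_exists_real_btwn.1 ha
  refine ⟨|r| / Real.log 2 + 1, by positivity, ?_⟩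
  filter_upwards [eventually_lt_of_limsup_lt hr, eventually_gt_atTop 0] with n hn hn0
  have hn_pos : (0 : ℝ) < n := by exact_mod_cast hn0
  have log_le : Real.log (a n) ≤ n * |r| := by
    rw [← inv_mul_le_iff₀ hn_pos]
    exact (EReal.coe_lt_coe_iff.1 hn).le.trans (le_abs_self r)
  have log_nonneg : 0 ≤ |r| / Real.log 2 := by positivity
  calc (Nat.log 2 (a n) : ℝ) + 1 ≤ Real.log (a n) / Real.log 2 + 1 :=
        add_le_add_left (Real.natLog_le_logb _ _) 1
    _ ≤ n * |r| / Real.log 2 + 1 := by gcongr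
    _ ≤ (|r| / Real.log 2 + 1) * (n + 1) := by
        rw [mul_div_assoc]
        nlinarith

lemma exponentialRate_natLog_mul_le {a : ℕ → ℕ} (ha : ∀ n, a n ≠ 0) :
    exponentialRate (fun n => (Nat.log 2 (a n) + 1) * (2 * (n + 1) * a n)) ≤ exponentialRate a := by
  rcases eq_or_ne (exponentialRate a) ⊤ with htop | htop
  · exact htop ▸ le_top
  obtain ⟨C, hC, hlog⟩ := exists_eventually_natLog_add_one_le (lt_top_iff_ne_top.2 htop)
  refine exponentialRate_le_of_le_mul (fun n => by simp [ha n]) ha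
    (tendsto_inv_mul_log_mul_add_one_sq (C := 2 * C) (by positivity)) ?_
  filter_upwards [hlog] with n hn
  push_cast
  calc ((Nat.log 2 (a n) : ℝ) + 1) * (2 * (n + 1) * a n)
      ≤ C * (n + 1) * (2 * (n + 1) * a n) := by gcongr
    _ = 2 * C * (n + 1) ^ 2 * a n := by ring

variable {X1 X2 : ℕ → Type} [∀ n, Finite (X1 n)] [∀ n, MeasurableSpace (X1 n)]
  [∀ n, MeasurableSpace (X2 n)]

lemma exists_bCode_rateB_le (μ : ∀ n, Measure (X1 n × X2 n)) [∀ n, IsProbabilityMeasure (μ n)]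
    (c : ∀ n, ACode (X1 n) (X2 n)) : ∃ b : ∀ n, BCode (X1 n) (X2 n), rateB b ≤ rateA c ∧
      ∀ n, μ n (b n).Tᶜ ≤ μ n (c n).Tᶜ + ((n + 1 : ℕ) : ℝ≥0∞)⁻¹ := by
  have (n : ℕ) : Nonempty (X1 n) := (nonempty_of_isProbabilityMeasure (μ n)).map Prod.fst
  choose b hbM hbT using fun n => (c n).exists_bCode (μ n) n.succ_ne_zero
  refine ⟨b, ?_, fun n => by simpa using hbT n⟩
  calc rateB b = exponentialRate fun n => (b n).M := rfl
    _ = exponentialRate fun n => (Nat.log 2 (c n).M + 1) * (2 * (n + 1) * (c n).M) := by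
        simp only [hbM]
    _ ≤ rateA c := exponentialRate_natLog_mul_le fun n => Nat.one_le_iff_ne_zero.1 (c n).hM

lemma iInf_rateA_eq_iInf_rateB (μ : ∀ n, Measure (X1 n × X2 n)) [∀ n, IsProbabilityMeasure (μ n)]
    {P : (ℕ → ℝ≥0∞) → Prop}
    (hP : ∀ ε ε' δ : ℕ → ℝ≥0∞, P ε → Tendsto δ atTop (𝓝 0) → (∀ n, ε' n ≤ ε n + δ n) → P ε') :
    ⨅ (c : ∀ n, ACode (X1 n) (X2 n)) (_ : P fun n => μ n (c n).Tᶜ), rateA c =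
      ⨅ (b : ∀ n, BCode (X1 n) (X2 n)) (_ : P fun n => μ n (b n).Tᶜ), rateB b := by
  apply le_antisymm
  · exact le_iInf₂ fun b hb => iInf₂_le (fun n => (b n).toACode) hb
  · refine le_iInf₂ fun c hc => ?_
    obtain ⟨b, hrate, herr⟩ := exists_bCode_rateB_le μ c
    have overhead_tendsto : Tendsto (fun n : ℕ => ((n + 1 : ℕ) : ℝ≥0∞)⁻¹) atTop (𝓝 0) :=
      ENNReal.tendsto_inv_nat_nhds_zero.comp (tendsto_add_atTop_nat 1)
    exact (iInf₂_le b (hP _ _ _ hc overhead_tendsto herr)).trans hrate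

end Rates

theorem statement0_general (X1 X2 : ℕ → Type) [∀ n, Finite (X1 n)] [∀ n, MeasurableSpace (X1 n)]
    [∀ n, MeasurableSpace (X2 n)] (μ : ∀ n, Measure (X1 n × X2 n))
    (hμ : ∀ n, IsProbabilityMeasure (μ n)) :
    RA μ = RB μ ∧ RAStar μ = RBStar μ := by
  refine ⟨iInf_rateA_eq_iInf_rateB μ (P := fun ε => Tendsto ε atTop (𝓝 0))
    fun ε ε' δ hε hδ hle => ?_, iInf_rateA_eq_iInf_rateB μ (P := fun ε => liminf ε atTop < 1)
    fun ε ε' δ hε hδ hle => ?_⟩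
  · exact tendsto_of_tendsto_of_tendsto_of_le_of_le tendsto_const_nhds
      (by simpa using hε.add hδ) (fun _ => zero_le) hle
  · calc liminf ε' atTop ≤ liminf (ε + δ) atTop := liminf_le_liminf (.of_forall hle)
      _ = liminf ε atTop := ENNReal.liminf_add_of_right_tendsto_zero hδ ε
      _ < 1 := hε

theorem statement0
    (X1 X2 : ℕ → Type)
    [∀ n, Fintype (X1 n)] [∀ n, Nonempty (X1 n)]
    [∀ n, Fintype (X2 n)] [∀ n, Nonempty (X2 n)]
    [∀ n, MeasurableSpace (X1 n)] [∀ n, MeasurableSpace (X2 n)]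
    (μ : ∀ n, Measure (X1 n × X2 n)) (hμ : ∀ n, IsProbabilityMeasure (μ n))
 :
    RA μ = RB μ ∧ RAStar μ = RBStar μ := by
  exact statement0_general X1 X2 μ hμ

end
end

section
/- Let s > 1 and set k_n = ⌊n^s⌋. If R > 0 is a continuity point of the function R ↦ ρ_A(R) (with values in [0,+∞]), then the optimal error exponent of A_n-codes at rate R equals that of k_n+1 B_n-codes at rate R: ρ_A(R) = ρ_B(R; (k_n)). -/
open MeasureTheory Filter Topology
open scoped ENNReal

noncomputable section

/-- Rate of a multi-sequence of `B`-codes: `limsup (1/n) log (max_i M_{i,n})`. -/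
def rateBMulti {X1 X2 : ℕ → Type} (k : ℕ → ℕ)
    (c : ∀ n, Fin (k n + 1) → BCode (X1 n) (X2 n)) : EReal :=
  Filter.limsup
    (fun n : ℕ => (((n : ℝ)⁻¹ * Real.log (⨆ i, ((c n i).M : ℝ)) : ℝ) : EReal))
    Filter.atTop

/-- `ρ_A(R)`: optimal error exponent of `A`-codes at rate `R`. -/
def rhoA {X1 X2 : ℕ → Type} [∀ n, MeasurableSpace (X1 n)] [∀ n, MeasurableSpace (X2 n)]
    (μ : ∀ n, Measure (X1 n × X2 n)) (R : ℝ) : EReal :=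
  ⨆ (c : ∀ n, ACode (X1 n) (X2 n)) (_ : rateA c ≤ (R : EReal)),
    Filter.liminf
      (fun n : ℕ => (((n : ℝ)⁻¹ : ℝ) : EReal) * ENNReal.log (μ n ((c n).T)ᶜ)⁻¹)
      Filter.atTop

/-- `ρ_B(R;(k_n))`: optimal error exponent of `k_n+1` `B`-codes at rate `R`. -/
def rhoBMulti {X1 X2 : ℕ → Type} [∀ n, MeasurableSpace (X1 n)] [∀ n, MeasurableSpace (X2 n)]
    (k : ℕ → ℕ) (μ : ∀ n, Measure (X1 n × X2 n)) (R : ℝ) : EReal :=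
  ⨆ (c : ∀ n, Fin (k n + 1) → BCode (X1 n) (X2 n)) (_ : rateBMulti k c ≤ (R : EReal)),
    Filter.liminf
      (fun n : ℕ => (((n : ℝ)⁻¹ : ℝ) : EReal) * ENNReal.log (μ n (⋂ i, ((c n i).T)ᶜ))⁻¹)
      Filter.atTop

/-!
A merged list of `k n + 1` many `B`-codes is an `A`-code: the encoder, who sees the side
information, announces a successful `B`-code together with its codeword. Since `k n` grows
subexponentially, this costs no rate.

Conversely, let an `A`-code of size `M` be given, with `M` of rate `r < R`, and put the source
values into `m ≈ exp (R n)` bins by `k n + 1` independent uniformly random functions. For each value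
of the side information the `A`-code decodes at most `M` source values correctly, so each of them
shares its bin with another one with probability at most `M / m`. All `k n + 1` functions fail for
it with probability at most `(M / m) ^ (k n + 1)`, which is superexponentially small because
`k n → ∞`. Hence `ρ_A(r) ≤ ρ_B(R)` for `r < R`, and left-continuity of `ρ_A` at `R` removes the gap.
-/

open ExpGrowth
open scoped NNReal Finset Asymptotics

section ExponentialGrowth

lemma limsup_inv_mul_log_eq_expGrowthSup {u : ℕ → ℝ} (hu : ∀ n, 0 < u n) :
    limsup (fun n : ℕ => (((n : ℝ)⁻¹ * Real.log (u n) : ℝ) : EReal)) atTop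
      = expGrowthSup fun n => ENNReal.ofReal (u n) := by
  refine congrArg (limsup · atTop) (funext fun n => ?_)
  rw [ENNReal.log_ofReal_of_pos (hu n), EReal.coe_mul, EReal.coe_inv, mul_comm]
  rfl

lemma liminf_inv_mul_log_inv_eq_neg_expGrowthSup (ε : ℕ → ℝ≥0∞) :
    liminf (fun n : ℕ => (((n : ℝ)⁻¹ : ℝ) : EReal) * ENNReal.log (ε n)⁻¹) atTop
      = -expGrowthSup ε := by
  rw [← expGrowthInf_inv]
  refine congrArg (liminf · atTop) (funext fun n => ?_)
  rw [EReal.coe_inv, mul_comm]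
  rfl

lemma expGrowthSup_add_one {u : ℕ → ℝ≥0∞} (hu : expGrowthSup u ≤ 0) :
    expGrowthSup (fun n => u n + 1) = 0 := by
  have hone : expGrowthSup (fun _ => (1 : ℝ≥0∞)) = 0 :=
    expGrowthSup_const one_ne_zero ENNReal.one_ne_top
  rw [show (fun n => u n + 1) = u + fun _ => 1 from rfl, expGrowthSup_add, hone, sup_eq_right.2 hu]

lemma expGrowthSup_pow_eq_bot {u : ℕ → ℝ≥0∞} {k : ℕ → ℕ} (hu : expGrowthSup u < 0)
    (hk : Tendsto k atTop atTop) : expGrowthSup (fun n => u n ^ k n) = ⊥ := by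
  obtain ⟨a, hua, ha⟩ := EReal.lt_iff_exists_real_btwn.1 hu
  have ha : a < 0 := by exact_mod_cast ha
  refine le_bot_iff.1 (EReal.le_of_forall_lt_iff_le.1 fun b _ => Eventually.expGrowthSup_le ?_)
  filter_upwards [eventually_le_exp hua,
    (tendsto_natCast_atTop_atTop.comp hk).atTop_mul_const_of_neg ha |>.eventually_le_atBot b]
    with n hun hkn
  have hkn : (k n : ℝ) * (a * n) ≤ b * n := by
    rw [← mul_assoc]; exact mul_le_mul_of_nonneg_right hkn n.cast_nonneg
  calc u n ^ k n ≤ EReal.exp (a * n) ^ k n := pow_le_pow_left' hun _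
    _ = EReal.exp (k n * (a * n)) := (EReal.exp_nmul _ _).symm
    _ ≤ EReal.exp (b * n) := EReal.exp_monotone (by exact_mod_cast hkn)

lemma expGrowthSup_natCeil_exp_le {R : ℝ} (hR : 0 ≤ R) :
    expGrowthSup (fun n => (⌈Real.exp (R * n)⌉₊ : ℝ≥0∞)) ≤ R := by
  have hceil (n : ℕ) : (⌈Real.exp (R * n)⌉₊ : ℝ≥0∞) ≤ EReal.exp (R * n) + 1 := by
    have hexp : 0 ≤ Real.exp (R * n) := (Real.exp_pos _).le
    have h := ENNReal.ofReal_le_ofReal (Nat.ceil_lt_add_one hexp).le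
    rwa [ENNReal.ofReal_natCast, ENNReal.ofReal_add hexp zero_le_one, ENNReal.ofReal_one] at h
  calc expGrowthSup (fun n => (⌈Real.exp (R * n)⌉₊ : ℝ≥0∞))
      ≤ expGrowthSup ((fun n : ℕ => EReal.exp (R * n)) + fun _ => 1) := expGrowthSup_monotone hceil
    _ = R := by
        rw [expGrowthSup_add, expGrowthSup_exp, expGrowthSup_const one_ne_zero ENNReal.one_ne_top]
        exact sup_eq_left.2 (by exact_mod_cast hR)

lemma le_expGrowthInf_natCeil_exp (R : ℝ) :
    R ≤ expGrowthInf (fun n => (⌈Real.exp (R * n)⌉₊ : ℝ≥0∞)) := by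
  refine Eventually.le_expGrowthInf (.of_forall fun n => ?_)
  rw [← EReal.coe_natCast, ← EReal.coe_mul, EReal.exp_coe, ← ENNReal.ofReal_natCast]
  exact ENNReal.ofReal_le_ofReal (Nat.le_ceil _)

lemma tendsto_natFloor_rpow_atTop {s : ℝ} (hs : 0 < s) :
    Tendsto (fun n : ℕ => ⌊(n : ℝ) ^ s⌋₊) atTop atTop :=
  tendsto_nat_floor_atTop.comp ((tendsto_rpow_atTop hs).comp tendsto_natCast_atTop_atTop)

lemma expGrowthSup_natFloor_rpow_le (s : ℝ) :
    expGrowthSup (fun n => (⌊(n : ℝ) ^ s⌋₊ : ℝ≥0∞)) ≤ 0 := by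
  refine EReal.le_of_forall_lt_iff_le.1 fun b hb => Eventually.expGrowthSup_le ?_
  have hb : 0 < b := by exact_mod_cast hb
  have hlittle : (fun n : ℕ => (n : ℝ) ^ s) =o[atTop] fun n : ℕ => Real.exp (b * n) :=
    (isLittleO_rpow_exp_pos_mul_atTop s hb).comp_tendsto tendsto_natCast_atTop_atTop
  filter_upwards [hlittle.bound one_pos] with n hn
  have hpow : 0 ≤ (n : ℝ) ^ s := Real.rpow_nonneg n.cast_nonneg s
  rw [Real.norm_of_nonneg hpow, Real.norm_of_nonneg (Real.exp_pos _).le, one_mul] at hn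
  rw [← EReal.coe_natCast, ← EReal.coe_mul, EReal.exp_coe, ← ENNReal.ofReal_natCast]
  exact ENNReal.ofReal_le_ofReal ((Nat.floor_le hpow).trans hn)

lemma expGrowthSup_mul_div_pow_eq_bot {u v : ℕ → ℝ≥0∞} {k : ℕ → ℕ}
    (huv : expGrowthSup u < expGrowthInf v) (hk : Tendsto k atTop atTop) :
    expGrowthSup (fun n => u n * (u n / v n) ^ k n) = ⊥ := by
  have hv : expGrowthInf v ≠ ⊥ := (bot_le.trans_lt huv).ne'
  have hdiv : expGrowthSup (u * v⁻¹) < 0 := by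
    calc expGrowthSup (u * v⁻¹)
        ≤ expGrowthSup u + expGrowthSup v⁻¹ :=
          expGrowthSup_mul_le (.inr (by simpa [expGrowthSup_inv] using hv)) (.inl huv.ne_top)
      _ = expGrowthSup u - expGrowthInf v := by rw [expGrowthSup_inv, sub_eq_add_neg]
      _ < 0 := (EReal.sub_neg (.inl huv.ne_top) (.inr hv)).2 huv
  have hpow : expGrowthSup (fun n => (u n / v n) ^ k n) = ⊥ := expGrowthSup_pow_eq_bot hdiv hk
  refine le_bot_iff.1 ((expGrowthSup_mul_le (.inr ?_) (.inl huv.ne_top)).trans ?_) <;> simp [hpow]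

end ExponentialGrowth

section RandomBinning

variable {α β ι : Type*}

/-- No element of `S` other than `a` lies in the bin of `a` under the binning function `f`, so that
`a` can be recovered from `f a` if it is known to lie in `S`. The definition does not require
`a ∈ S`. -/
def Isolates (f : α → β) (S : Set α) (a : α) : Prop :=
  ∀ a' ∈ S, f a' = f a → a' = a

/-- Each element of `S` is isolated by one of the binning functions `F i`, which may depend on the
element. -/
def Separates (F : ι → α → β) (S : Set α) : Prop :=
  ∀ a ∈ S, ∃ i, Isolates (F i) S a

open scoped Classical in
lemma dens_filter_apply_eq_apply [Fintype α] [Fintype β] {a b : α} (hab : a ≠ b) :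
    ({f : α → β | f a = f b} : Finset (α → β)).dens = (Fintype.card β : ℚ≥0)⁻¹ := by
  let resample : {f : α → β // f a = f b} × β ≃ (α → β) :=
    { toFun := fun p => Function.update p.1 a p.2
      invFun := fun g => (⟨Function.update g a (g b), by simp [hab.symm]⟩, g a)
      left_inv := fun ⟨⟨f, hf⟩, y⟩ => by simp [hab.symm, ← hf]
      right_inv := fun g => by simp }
  have hcard : #{f : α → β | f a = f b} * Fintype.card β = Fintype.card (α → β) := by
    rw [← Fintype.card_subtype, ← Fintype.card_prod]
    exact Fintype.card_congr resample
  have : Nonempty α := ⟨a⟩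
  rcases isEmpty_or_nonempty β with hβ | hβ
  · simp [Finset.dens]
  · have hne : (#{f : α → β | f a = f b} : ℚ≥0) ≠ 0 :=
      Nat.cast_ne_zero.2 (left_ne_zero_of_mul (hcard.trans_ne Fintype.card_ne_zero))
    rw [Finset.dens_eq_card_div_card, ← hcard, Nat.cast_mul, div_mul_cancel_left₀ hne]

lemma dens_filter_forall_apply {Ω : Type*} [Fintype ι] [DecidableEq ι] [Fintype Ω] (P : Ω → Prop)
    [DecidablePred P] : ({F : ι → Ω | ∀ i, P (F i)} : Finset (ι → Ω)).dens
      = ({ω | P ω} : Finset Ω).dens ^ Fintype.card ι := by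
  have hpi : ({F : ι → Ω | ∀ i, P (F i)} : Finset (ι → Ω))
      = Fintype.piFinset fun _ => ({ω | P ω} : Finset Ω) := by
    ext F
    simp
  simp [hpi, Finset.dens, div_pow]

open scoped Classical in
lemma dens_filter_not_isolates_le [Fintype α] [Fintype β] (S : Finset α) (a : α) :
    ({f : α → β | ¬ Isolates f S a} : Finset (α → β)).dens ≤ #S / Fintype.card β := by
  have hsub : ({f : α → β | ¬ Isolates f S a} : Finset (α → β))
      ⊆ (S.erase a).biUnion fun a' => {f | f a' = f a} := by
    intro f
    simp only [Isolates, Finset.mem_filter_univ, Finset.mem_biUnion, Finset.mem_erase,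
      Finset.mem_coe]
    grind
  calc ({f : α → β | ¬ Isolates f S a} : Finset (α → β)).dens
      ≤ ∑ a' ∈ S.erase a, ({f : α → β | f a' = f a} : Finset (α → β)).dens :=
        (Finset.dens_le_dens hsub).trans Finset.dens_biUnion_le
    _ = ∑ _a' ∈ S.erase a, (Fintype.card β : ℚ≥0)⁻¹ :=
        Finset.sum_congr rfl fun a' ha' => dens_filter_apply_eq_apply (Finset.ne_of_mem_erase ha')
    _ = #(S.erase a) / Fintype.card β := by simp [div_eq_mul_inv]
    _ ≤ #S / Fintype.card β := by gcongr; exact Finset.erase_subset a S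

open scoped Classical in
lemma dens_filter_not_separates_le [Fintype α] [Fintype β] [Fintype ι] (S : Set α) :
    ({F : ι → α → β | ¬ Separates F S} : Finset (ι → α → β)).dens
      ≤ S.ncard * (S.ncard / Fintype.card β) ^ Fintype.card ι := by
  lift S to Finset α using S.toFinite
  rw [Set.ncard_coe_finset]
  have hunion : ({F : ι → α → β | ¬ Separates F S} : Finset (ι → α → β))
      = S.biUnion fun a => {F | ∀ i, ¬ Isolates (F i) S a} := by
    ext F
    simp [Separates]
  calc ({F : ι → α → β | ¬ Separates F S} : Finset (ι → α → β)).dens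
      ≤ ∑ a ∈ S, ({F : ι → α → β | ∀ i, ¬ Isolates (F i) S a} : Finset (ι → α → β)).dens :=
        hunion ▸ Finset.dens_biUnion_le
    _ ≤ ∑ _a ∈ S, (#S / Fintype.card β : ℚ≥0) ^ Fintype.card ι := by
        refine Finset.sum_le_sum fun a _ => ?_
        rw [dens_filter_forall_apply fun f : α → β => ¬ Isolates f S a]
        exact pow_le_pow_left' (dens_filter_not_isolates_le S a) _
    _ = #S * (#S / Fintype.card β) ^ Fintype.card ι := by simp

open scoped Classical in
lemma exists_measure_le_of_forall_dens_le {Ω Z : Type*} [Fintype Ω] [Nonempty Ω]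
    [MeasurableSpace Z] (μ : Measure Z) {E : Ω → Set Z} (hE : ∀ ω, MeasurableSet (E ω)) {p : ℚ≥0}
    (hp : ∀ z, ({ω | z ∈ E ω} : Finset Ω).dens ≤ p) :
    ∃ ω, μ (E ω) ≤ (p : ℝ≥0) * μ Set.univ := by
  have hcount (z : Z) : ∑ ω, (E ω).indicator (1 : Z → ℝ≥0∞) z ≤ Fintype.card Ω * (p : ℝ≥0) := by
    have hz : (#{ω | z ∈ E ω} : ℚ≥0) ≤ Fintype.card Ω * p := by
      rw [← Finset.card_mul_dens]
      exact mul_le_mul_right (hp z) _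
    have hz' : (#{ω | z ∈ E ω} : ℝ≥0) ≤ Fintype.card Ω * p := by exact_mod_cast hz
    simpa [Set.indicator_apply] using ENNReal.coe_le_coe.2 hz'
  obtain ⟨ω, -, hω⟩ := ENNReal.exists_le_of_sum_le Finset.univ_nonempty <|
    calc ∑ ω, μ (E ω) = ∫⁻ z, ∑ ω, (E ω).indicator 1 z ∂μ := by
          rw [lintegral_finsetSum _ fun ω _ => measurable_one.indicator (hE ω)]
          simp [hE]
      _ ≤ ∫⁻ _, (Fintype.card Ω * (p : ℝ≥0) : ℝ≥0∞) ∂μ := lintegral_mono hcount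
      _ = ∑ _ω : Ω, ((p : ℝ≥0) * μ Set.univ : ℝ≥0∞) := by simp [mul_assoc]
  exact ⟨ω, hω⟩

variable {γ : Type*} [Finite α] [MeasurableSpace α] [MeasurableSpace γ]

lemma measurableSet_setOf_section {G : Set (α × γ)} (hG : MeasurableSet G) (P : Set α → Prop) :
    MeasurableSet {y | P {x | (x, y) ∈ G}} :=
  have hsection : Measurable fun y => {x | (x, y) ∈ G} :=
    measurable_set_iff.2 fun _ => (measurable_prodMk_left hG).mem
  hsection (MeasurableSet.of_discrete (s := {S | P S}))

variable (ι β) in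
lemma exists_measure_not_separates_le [Fintype ι] [Fintype β] [Nonempty β] (μ : Measure (α × γ))
    {G : Set (α × γ)} (hG : MeasurableSet G) {N : ℕ} (hN : ∀ y, {x | (x, y) ∈ G}.ncard ≤ N) :
    ∃ F : ι → α → β, μ {p | ¬ Separates F {x | (x, p.2) ∈ G}}
      ≤ N * (N / Fintype.card β : ℝ≥0∞) ^ Fintype.card ι * μ Set.univ := by
  classical
  have := Fintype.ofFinite α
  have hdens (p : α × γ) :
      ({F | ¬ Separates F {x | (x, p.2) ∈ G}} : Finset (ι → α → β)).dens
        ≤ N * (N / Fintype.card β) ^ Fintype.card ι := by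
    have hcard : {x | (x, p.2) ∈ G}.ncard ≤ N := hN p.2
    refine (dens_filter_not_separates_le _).trans ?_
    gcongr
  -- Failure on the whole section, unlike failure at `p.1`, depends on `p.2` only; this is what
  -- makes it measurable for an arbitrary σ-algebra on `α`.
  obtain ⟨F, hF⟩ := exists_measure_le_of_forall_dens_le μ
    (E := fun F : ι → α → β => {p | ¬ Separates F {x | (x, p.2) ∈ G}})
    (fun F => measurable_snd (measurableSet_setOf_section hG fun S => ¬ Separates F S))
    fun p => by convert hdens p
  have hβ : (Fintype.card β : ℝ≥0) ≠ 0 := by simp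
  exact ⟨F, by simpa [ENNReal.coe_div hβ] using hF⟩

end RandomBinning

section Codes

variable {X1 X2 : Type}

/-- The `B`-code whose encoder is the binning function `f` and whose decoder picks, in the announced
bin, an element of the section of `G` over the side information. The set `G` collects the pairs that
the code is meant to recover. -/
def BCode.ofBinning [Nonempty X1] {m : ℕ} (G : Set (X1 × X2)) (f : X1 → Fin m) : BCode X1 X2 where
  M := m
  hM := (f (Classical.arbitrary X1)).pos
  enc := f
  dec q := Classical.epsilon fun x => (x, q.2) ∈ G ∧ f x = q.1

lemma BCode.mem_T_ofBinning [Nonempty X1] {m : ℕ} {G : Set (X1 × X2)} {f : X1 → Fin m}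
    {p : X1 × X2} (hp : p ∈ G) (hf : Isolates f {x | (x, p.2) ∈ G} p.1) :
    p ∈ (BCode.ofBinning G f).T :=
  have hdec := Classical.epsilon_spec (p := fun x => (x, p.2) ∈ G ∧ f x = f p.1) ⟨p.1, hp, rfl⟩
  hf _ hdec.1 hdec.2

lemma BCode.iInter_compl_T_ofBinning_subset [Nonempty X1] {ι : Type*} {m : ℕ} (G : Set (X1 × X2))
    (F : ι → X1 → Fin m) :
    ⋂ i, (BCode.ofBinning G (F i)).Tᶜ ⊆ Gᶜ ∪ {p | ¬ Separates F {x | (x, p.2) ∈ G}} := by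
  intro p hp
  by_contra! hcon
  simp only [Set.mem_union, Set.mem_compl_iff, Set.mem_ofPred_eq, not_or, not_not] at hcon
  obtain ⟨hpG, hsep⟩ := hcon
  obtain ⟨i, hi⟩ := hsep p.1 hpG
  exact Set.mem_iInter.1 hp i (BCode.mem_T_ofBinning hpG hi)

lemma ACode.ncard_section_le (c : ACode X1 X2) {G : Set (X1 × X2)} (hG : G ⊆ c.T) (y : X2) :
    {x | (x, y) ∈ G}.ncard ≤ c.M := by
  have hinj : Set.InjOn (fun x => c.enc (x, y)) {x | (x, y) ∈ G} := by
    intro x hx x' hx' (henc : c.enc (x, y) = c.enc (x', y))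
    calc x = c.dec (c.enc (x, y), y) := (hG hx).symm
      _ = c.dec (c.enc (x', y), y) := by rw [henc]
      _ = x' := hG hx'
  simpa using Set.ncard_le_ncard_of_injOn (t := Set.univ) _ (fun _ _ => Set.mem_univ _) hinj

lemma ACode.exists_bCodes_measure_iInter_compl_le [Finite X1] [Nonempty X1] [MeasurableSpace X1]
    [MeasurableSpace X2] (μ : Measure (X1 × X2)) (c : ACode X1 X2) (m K : ℕ) [NeZero m] :
    ∃ b : Fin K → BCode X1 X2, (∀ i, (b i).M = m) ∧
      μ (⋂ i, (b i).Tᶜ) ≤ μ c.Tᶜ + c.M * (c.M / m : ℝ≥0∞) ^ K * μ Set.univ := by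
  -- `c.T` need not be measurable.
  set G : Set (X1 × X2) := (toMeasurable μ c.Tᶜ)ᶜ with hGdef
  have hG : MeasurableSet G := (measurableSet_toMeasurable _ _).compl
  have hGT : G ⊆ c.T := Set.compl_subset_comm.1 (subset_toMeasurable μ c.Tᶜ)
  obtain ⟨F, hF⟩ := exists_measure_not_separates_le (Fin m) (Fin K) μ hG (c.ncard_section_le hGT)
  rw [Fintype.card_fin, Fintype.card_fin] at hF
  refine ⟨fun i => BCode.ofBinning G (F i), fun i => rfl, ?_⟩
  calc μ (⋂ i, (BCode.ofBinning G (F i)).Tᶜ)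
      ≤ μ Gᶜ + μ {p | ¬ Separates F {x | (x, p.2) ∈ G}} :=
        (measure_mono (BCode.iInter_compl_T_ofBinning_subset G F)).trans (measure_union_le _ _)
    _ ≤ μ c.Tᶜ + c.M * (c.M / m : ℝ≥0∞) ^ K * μ Set.univ := by
        rw [hGdef, compl_compl, measure_toMeasurable]
        gcongr

/-- The `A`-code with decoder `dec`, whose encoder announces an index from which `dec` recovers the
source, whenever there is one. The index type `κ` is identified with `Fin (Fintype.card κ)`. -/
def ACode.ofDecoder {κ : Type*} [Fintype κ] [Nonempty κ] (dec : κ → X2 → X1) : ACode X1 X2 where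
  M := Fintype.card κ
  hM := Fintype.card_pos
  enc p := Fintype.equivFin κ (Classical.epsilon fun j => dec j p.2 = p.1)
  dec q := dec ((Fintype.equivFin κ).symm q.1) q.2

lemma ACode.mem_T_ofDecoder {κ : Type*} [Fintype κ] [Nonempty κ] {dec : κ → X2 → X1}
    {p : X1 × X2} {j : κ} (hj : dec j p.2 = p.1) : p ∈ (ACode.ofDecoder dec).T := by
  change dec ((Fintype.equivFin κ).symm (Fintype.equivFin κ _)) p.2 = p.1
  rw [Equiv.symm_apply_apply]
  exact Classical.epsilon_spec (p := fun j => dec j p.2 = p.1) ⟨j, hj⟩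

lemma ACode.exists_compl_T_subset_iInter_compl {ι : Type*} [Fintype ι] [Nonempty ι]
    (b : ι → BCode X1 X2) : ∃ c : ACode X1 X2, c.M = ∑ i, (b i).M ∧ c.Tᶜ ⊆ ⋂ i, (b i).Tᶜ := by
  have : Nonempty (Σ i, Fin (b i).M) := ⟨Classical.arbitrary ι, 0, (b _).hM⟩
  let dec (j : Σ i, Fin (b i).M) (y : X2) : X1 := (b j.1).dec (j.2, y)
  refine ⟨ACode.ofDecoder dec, by simp [ACode.ofDecoder], Set.subset_iInter fun i => ?_⟩
  exact Set.compl_subset_compl.2 fun p hp => ACode.mem_T_ofDecoder (j := ⟨i, (b i).enc p.1⟩) hp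

end Codes

section Exponents

variable {X1 X2 : ℕ → Type}

lemma rateA_eq_expGrowthSup (c : ∀ n, ACode (X1 n) (X2 n)) :
    rateA c = expGrowthSup fun n => ((c n).M : ℝ≥0∞) := by
  refine (limsup_inv_mul_log_eq_expGrowthSup fun n => Nat.cast_pos.2 (c n).hM).trans ?_
  simp only [ENNReal.ofReal_natCast]

lemma rateBMulti_eq_expGrowthSup (k : ℕ → ℕ) (c : ∀ n, Fin (k n + 1) → BCode (X1 n) (X2 n)) :
    rateBMulti k c = expGrowthSup fun n => ⨆ i, ((c n i).M : ℝ≥0∞) := by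
  have hbdd (n : ℕ) : BddAbove (Set.range fun i => ((c n i).M : ℝ)) := (Set.finite_range _).bddAbove
  refine (limsup_inv_mul_log_eq_expGrowthSup fun n => ?_).trans ?_
  · exact (Nat.cast_pos.2 (c n 0).hM).trans_le (le_ciSup (hbdd n) 0)
  · simp only [← ENNReal.ofReal_natCast, ENNReal.ofReal_mono.map_ciSup_of_continuousAt
      ENNReal.continuous_ofReal.continuousAt (hbdd _)]

variable [∀ n, MeasurableSpace (X1 n)] [∀ n, MeasurableSpace (X2 n)]
  {μ : ∀ n, Measure (X1 n × X2 n)} {k : ℕ → ℕ} {R : ℝ} {L : EReal}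

lemma rhoA_le_iff : rhoA μ R ≤ L ↔ ∀ c : ∀ n, ACode (X1 n) (X2 n),
    expGrowthSup (fun n => ((c n).M : ℝ≥0∞)) ≤ R → -expGrowthSup (fun n => μ n (c n).Tᶜ) ≤ L := by
  simp only [rhoA, iSup_le_iff, rateA_eq_expGrowthSup, liminf_inv_mul_log_inv_eq_neg_expGrowthSup]

lemma rhoBMulti_le_iff : rhoBMulti k μ R ≤ L ↔ ∀ c : ∀ n, Fin (k n + 1) → BCode (X1 n) (X2 n),
    expGrowthSup (fun n => ⨆ i, ((c n i).M : ℝ≥0∞)) ≤ R →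
      -expGrowthSup (fun n => μ n (⋂ i, (c n i).Tᶜ)) ≤ L := by
  simp only [rhoBMulti, iSup_le_iff, rateBMulti_eq_expGrowthSup,
    liminf_inv_mul_log_inv_eq_neg_expGrowthSup]

lemma rhoBMulti_le_rhoA (μ : ∀ n, Measure (X1 n × X2 n))
    (hk : expGrowthSup (fun n => (k n : ℝ≥0∞)) ≤ 0) : rhoBMulti k μ R ≤ rhoA μ R := by
  refine rhoBMulti_le_iff.2 fun b hb => ?_
  choose c hcM hcT using fun n => ACode.exists_compl_T_subset_iInter_compl (b n)
  have hrate : expGrowthSup (fun n => ((c n).M : ℝ≥0∞)) ≤ R := by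
    have hM (n : ℕ) : ((c n).M : ℝ≥0∞) ≤ (k n + 1) * ⨆ i, ((b n i).M : ℝ≥0∞) := by
      rw [hcM, Nat.cast_sum]
      calc ∑ i, ((b n i).M : ℝ≥0∞) ≤ ∑ _i : Fin (k n + 1), ⨆ i, ((b n i).M : ℝ≥0∞) :=
            Finset.sum_le_sum fun i _ => le_iSup (fun i => ((b n i).M : ℝ≥0∞)) i
        _ = (k n + 1) * ⨆ i, ((b n i).M : ℝ≥0∞) := by simp
    calc expGrowthSup (fun n => ((c n).M : ℝ≥0∞))
        ≤ expGrowthSup ((fun n => (k n : ℝ≥0∞) + 1) * fun n => ⨆ i, ((b n i).M : ℝ≥0∞)) :=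
          expGrowthSup_monotone hM
      _ ≤ expGrowthSup (fun n => (k n : ℝ≥0∞) + 1)
            + expGrowthSup fun n => ⨆ i, ((b n i).M : ℝ≥0∞) :=
          expGrowthSup_mul_le (.inl (by simp [expGrowthSup_add_one hk]))
            (.inl (by simp [expGrowthSup_add_one hk]))
      _ ≤ R := by rwa [expGrowthSup_add_one hk, zero_add]
  calc -expGrowthSup (fun n => μ n (⋂ i, (b n i).Tᶜ))
      ≤ -expGrowthSup (fun n => μ n (c n).Tᶜ) :=
        EReal.neg_le_neg_iff.2 (expGrowthSup_monotone fun n => measure_mono (hcT n))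
    _ ≤ rhoA μ R := rhoA_le_iff.1 le_rfl c hrate

lemma rhoA_le_rhoBMulti [∀ n, Finite (X1 n)] (μ : ∀ n, Measure (X1 n × X2 n))
    [∀ n, IsProbabilityMeasure (μ n)] {r : ℝ} (hR : 0 ≤ R) (hrR : r < R)
    (hk : Tendsto k atTop atTop) : rhoA μ r ≤ rhoBMulti k μ R := by
  have (n : ℕ) : Nonempty (X1 n) := (nonempty_of_isProbabilityMeasure (μ n)).map Prod.fst
  refine rhoA_le_iff.2 fun c hc => ?_
  let m (n : ℕ) : ℕ := ⌈Real.exp (R * n)⌉₊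
  have hm (n : ℕ) : NeZero (m n) := ⟨(Nat.ceil_pos.2 (Real.exp_pos _)).ne'⟩
  choose b hbM hbT using fun n =>
    (c n).exists_bCodes_measure_iInter_compl_le (μ n) (m n) (k n + 1)
  have hrate : expGrowthSup (fun n => ⨆ i, ((b n i).M : ℝ≥0∞)) ≤ R := by
    simpa only [hbM, iSup_const] using expGrowthSup_natCeil_exp_le hR
  have hcoll : expGrowthSup (fun n => ((c n).M : ℝ≥0∞) * ((c n).M / m n) ^ (k n + 1)) = ⊥ :=
    expGrowthSup_mul_div_pow_eq_bot
      (hc.trans_lt ((EReal.coe_lt_coe_iff.2 hrR).trans_le (le_expGrowthInf_natCeil_exp R)))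
      ((tendsto_add_atTop_nat 1).comp hk)
  have herror : expGrowthSup (fun n => μ n (⋂ i, (b n i).Tᶜ))
      ≤ expGrowthSup (fun n => μ n (c n).Tᶜ) :=
    calc expGrowthSup (fun n => μ n (⋂ i, (b n i).Tᶜ))
        ≤ expGrowthSup ((fun n => μ n (c n).Tᶜ)
            + fun n => ((c n).M : ℝ≥0∞) * ((c n).M / m n) ^ (k n + 1)) :=
          expGrowthSup_monotone fun n => by simpa using hbT n
      _ = expGrowthSup (fun n => μ n (c n).Tᶜ) := by rw [expGrowthSup_add, hcoll, sup_bot_eq]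
  exact (EReal.neg_le_neg_iff.2 herror).trans (rhoBMulti_le_iff.1 le_rfl b hrate)

end Exponents

theorem statement2_general {X1 X2 : ℕ → Type} [∀ n, Finite (X1 n)]
    [∀ n, MeasurableSpace (X1 n)] [∀ n, MeasurableSpace (X2 n)]
    (μ : ∀ n, Measure (X1 n × X2 n)) [∀ n, IsProbabilityMeasure (μ n)]
    {R : ℝ} (hR : 0 < R) {k : ℕ → ℕ} (hk : Tendsto k atTop atTop)
    (hk' : expGrowthSup (fun n => (k n : ℝ≥0∞)) ≤ 0)
    (hcont : ContinuousWithinAt (fun r : ℝ => rhoA μ r) (Set.Iio R) R) :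
    rhoA μ R = rhoBMulti k μ R := by
  refine le_antisymm (le_of_tendsto hcont ?_) (rhoBMulti_le_rhoA μ hk')
  filter_upwards [self_mem_nhdsWithin] with r hr using rhoA_le_rhoBMulti μ hR.le hr hk

theorem statement2
    (X1 X2 : ℕ → Type)
    [∀ n, Fintype (X1 n)] [∀ n, Nonempty (X1 n)]
    [∀ n, Fintype (X2 n)] [∀ n, Nonempty (X2 n)]
    [∀ n, MeasurableSpace (X1 n)] [∀ n, MeasurableSpace (X2 n)]
    (μ : ∀ n, Measure (X1 n × X2 n)) (hμ : ∀ n, IsProbabilityMeasure (μ n))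
    (R s : ℝ) (hR : 0 < R) (hs : 1 < s)
    (hcont : ContinuousAt (fun r : ℝ => rhoA μ r) R) :
    rhoA μ R = rhoBMulti (fun n => ⌊(n : ℝ) ^ s⌋₊) μ R :=
  statement2_general μ hR (tendsto_natFloor_rpow_atTop (one_pos.trans hs))
    (expGrowthSup_natFloor_rpow_le s) hcont.continuousWithinAt

end
end

section
/- If ε_C(R|μ) ≠ 1, then 1/(1 − ε_C(R|μ)) = inf{ G_u(ν‖μ) : ν a source with R_C(ν) ≤ R }. -/
open MeasureTheory Filter Topology
open scoped ENNReal

noncomputable section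

/-- Rate of a code sequence: `limsup (1/n) log ‖c_n‖`. -/
def rate {C : ℕ → Type} (size : ∀ n, C n → ℝ) (c : ∀ n, C n) : EReal :=
  Filter.limsup (fun n : ℕ => (((n : ℝ)⁻¹ * Real.log (size n (c n)) : ℝ) : EReal)) Filter.atTop

/-- `G(ν‖μ) = ∫ (dν/dμ) dν` if `ν ≪ μ`, `+∞` otherwise. -/
def Gdiv {Ω : Type} [MeasurableSpace Ω] (ν μ : Measure Ω) : ℝ≥0∞ :=
  open Classical in
  if ν ≪ μ then ∫⁻ x, ν.rnDeriv μ x ∂ν else ⊤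

/-- `G_u(ν‖μ) = limsup_n G(ν_n‖μ_n)`. -/
def Gu {Ω : ℕ → Type} [∀ n, MeasurableSpace (Ω n)]
    (ν μ : ∀ n, Measure (Ω n)) : ℝ≥0∞ :=
  Filter.limsup (fun n => Gdiv (ν n) (μ n)) Filter.atTop

/-- `R_C(ν)`: the infimum of rates of code sequences whose success probability under `ν`
tends to one. -/
def RC {Ω : ℕ → Type} [∀ n, MeasurableSpace (Ω n)] {C : ℕ → Type}
    (size : ∀ n, C n → ℝ) (T : ∀ n, C n → Set (Ω n)) (ν : ∀ n, Measure (Ω n)) : EReal :=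
  ⨅ (c : ∀ n, C n) (_ : Filter.Tendsto (fun n => ν n (T n (c n))) Filter.atTop (nhds 1)),
    rate size c

/-- `ε_C(R|μ)`: infimum over code sequences of rate at most `R` of the limsup of the
error probabilities. -/
def epsC {Ω : ℕ → Type} [∀ n, MeasurableSpace (Ω n)] {C : ℕ → Type}
    (size : ∀ n, C n → ℝ) (T : ∀ n, C n → Set (Ω n)) (μ : ∀ n, Measure (Ω n)) (R : ℝ) :
    ℝ≥0∞ :=
  ⨅ (c : ∀ n, C n) (_ : rate size c ≤ (R : EReal)),
    Filter.limsup (fun n => μ n (T n (c n))ᶜ) Filter.atTop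

/-!
Cauchy-Schwarz gives `ν S ^ 2 / μ S ≤ G(ν‖μ)` for every event `S`, and conditioning `μ` on `S`
attains equality. Hence, for events `S n`, the least `G_u(ν‖μ)` over sources with `ν n (S n) → 1` is
`limsup 1 / μ n (S n) = 1 / (1 - limsup μ n (S n)ᶜ)`. Taking `S n = T n (c n)` and the infimum over
code sequences of rate at most `R` yields the theorem, because the infimum defining `R_C(ν)` is
attained by a diagonal code sequence.
-/

section Diagonal

theorem exists_tendsto_atTop_eventually_diagonal {P : ℕ → ℕ → Prop}
    (hP : ∀ k, ∀ᶠ n in atTop, P k n) :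
    ∃ k : ℕ → ℕ, Tendsto k atTop atTop ∧ ∀ᶠ n in atTop, P (k n) n := by
  classical
  refine ⟨fun n => Nat.findGreatest (fun k => P k n) n, tendsto_atTop.2 fun K => ?_, ?_⟩
  · filter_upwards [hP K, eventually_ge_atTop K] with n hn hKn
    exact Nat.le_findGreatest hKn hn
  · filter_upwards [hP 0] with n hn
    exact Nat.findGreatest_spec (P := fun k => P k n) n.zero_le hn

theorem exists_rate_eq_RC {Ω : ℕ → Type} [∀ n, MeasurableSpace (Ω n)] {C : ℕ → Type}
    {size : ∀ n, C n → ℝ} {T : ∀ n, C n → Set (Ω n)} {ν : ∀ n, Measure (Ω n)}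
    (h : RC size T ν ≠ ⊤) :
    ∃ c : ∀ n, C n, Tendsto (fun n => ν n (T n (c n))) atTop (𝓝 1) ∧
      rate size c = RC size T ν := by
  obtain ⟨r, -, hr_mem, hr_lim⟩ := exists_seq_strictAnti_tendsto' h.lt_top
  obtain ⟨U, hU⟩ := (𝓝 (1 : ℝ≥0∞)).exists_antitone_basis
  have hcodes : ∀ k, ∃ c : ∀ n, C n,
      Tendsto (fun n => ν n (T n (c n))) atTop (𝓝 1) ∧ rate size c < r k := fun k => by
    simpa only [RC, iInf_lt_iff, exists_prop] using (hr_mem k).1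
  choose c hc_lim hc_rate using hcodes
  obtain ⟨k, hk, hdiag⟩ := exists_tendsto_atTop_eventually_diagonal fun k =>
    (eventually_lt_of_limsup_lt (hc_rate k)).and ((hc_lim k).eventually_mem (hU.mem k))
  have hlim : Tendsto (fun n => ν n (T n (c (k n) n))) atTop (𝓝 1) :=
    (hU.tendsto_smallSets.comp hk).of_smallSets (hdiag.mono fun _ hn => hn.2)
  refine ⟨fun n => c (k n) n, hlim, le_antisymm ?_ (iInf₂_le (fun n => c (k n) n) hlim)⟩
  calc rate size (fun n => c (k n) n)
      ≤ limsup (r ∘ k) atTop := limsup_le_limsup (hdiag.mono fun _ hn => hn.1.le)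
    _ = RC size T ν := (hr_lim.comp hk).limsup_eq

end Diagonal

section InvOneSub

theorem monotone_inv_one_sub : Monotone fun x : ℝ≥0∞ => (1 - x)⁻¹ := fun _ _ h =>
  ENNReal.inv_le_inv.2 (tsub_le_tsub_left h 1)

theorem continuous_inv_one_sub : Continuous fun x : ℝ≥0∞ => (1 - x)⁻¹ :=
  continuous_inv.comp (ENNReal.continuous_sub_left ENNReal.one_ne_top)

theorem inv_one_sub_iInf {ι : Sort*} (f : ι → ℝ≥0∞) : (1 - ⨅ i, f i)⁻¹ = ⨅ i, (1 - f i)⁻¹ :=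
  monotone_inv_one_sub.map_iInf_of_continuousAt continuous_inv_one_sub.continuousAt (by simp)

theorem inv_one_sub_limsup {ι : Type*} {l : Filter ι} [l.NeBot] (u : ι → ℝ≥0∞) :
    (1 - limsup u l)⁻¹ = limsup (fun i => (1 - u i)⁻¹) l :=
  monotone_inv_one_sub.map_limsup_of_continuousAt u continuous_inv_one_sub.continuousAt

theorem inv_one_sub_epsC {Ω : ℕ → Type} [∀ n, MeasurableSpace (Ω n)] {C : ℕ → Type}
    (size : ∀ n, C n → ℝ) {T : ∀ n, C n → Set (Ω n)} (hT : ∀ n (c : C n), MeasurableSet (T n c))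
    (μ : ∀ n, Measure (Ω n)) [∀ n, IsProbabilityMeasure (μ n)] (R : ℝ) :
    (1 - epsC size T μ R)⁻¹ = ⨅ (c : ∀ n, C n) (_ : rate size c ≤ (R : EReal)),
      limsup (fun n => (μ n (T n (c n)))⁻¹) atTop := by
  have hcompl (n : ℕ) (c : C n) : 1 - μ n (T n c)ᶜ = μ n (T n c) := by
    rw [← prob_compl_eq_one_sub (hT n c).compl, compl_compl]
  simp only [epsC, inv_one_sub_iInf, inv_one_sub_limsup, hcompl]

end InvOneSub

section Gdiv

theorem sq_lintegral_le_lintegral_sq_mul_measure_univ {α : Type*} [MeasurableSpace α]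
    {μ : Measure α} {f : α → ℝ≥0∞} (hf : AEMeasurable f μ) :
    (∫⁻ x, f x ∂μ) ^ 2 ≤ (∫⁻ x, f x ^ 2 ∂μ) * μ Set.univ := by
  have hsqrt (x : ℝ≥0∞) : (x ^ (1 / 2 : ℝ)) ^ 2 = x := by
    rw [← ENNReal.rpow_mul_natCast]; norm_num
  have hCS := ENNReal.lintegral_mul_le_Lp_mul_Lq μ Real.HolderConjugate.two_two hf
    (aemeasurable_const (b := (1 : ℝ≥0∞)))
  simp only [Pi.mul_apply, mul_one, ENNReal.rpow_two, one_pow, lintegral_one] at hCS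
  calc (∫⁻ x, f x ∂μ) ^ 2
      ≤ ((∫⁻ x, f x ^ 2 ∂μ) ^ (1 / 2 : ℝ) * μ Set.univ ^ (1 / 2 : ℝ)) ^ 2 := by gcongr
    _ = (∫⁻ x, f x ^ 2 ∂μ) * μ Set.univ := by rw [mul_pow, hsqrt, hsqrt]

variable {Ω : Type} [MeasurableSpace Ω] {ν μ : Measure Ω} {S : Set Ω}

theorem Gdiv_eq_lintegral_rnDeriv_sq [ν.HaveLebesgueDecomposition μ] (h : ν ≪ μ) :
    Gdiv ν μ = ∫⁻ x, ν.rnDeriv μ x ^ 2 ∂μ := by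
  simp only [Gdiv, if_pos h, sq]
  exact (lintegral_rnDeriv_mul h (Measure.measurable_rnDeriv ν μ).aemeasurable).symm

theorem sq_measure_div_le_Gdiv [ν.HaveLebesgueDecomposition μ] (hS : MeasurableSet S) :
    ν S ^ 2 / μ S ≤ Gdiv ν μ := by
  by_cases h : ν ≪ μ
  · refine ENNReal.div_le_of_le_mul ?_
    calc ν S ^ 2 = (∫⁻ x in S, ν.rnDeriv μ x ∂μ) ^ 2 := by rw [Measure.setLIntegral_rnDeriv' h hS]
      _ ≤ (∫⁻ x in S, ν.rnDeriv μ x ^ 2 ∂μ) * μ S := by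
        simpa only [Measure.restrict_apply_univ] using
          sq_lintegral_le_lintegral_sq_mul_measure_univ (μ := μ.restrict S)
            (Measure.measurable_rnDeriv ν μ).aemeasurable
      _ ≤ Gdiv ν μ * μ S := by
        rw [Gdiv_eq_lintegral_rnDeriv_sq h]
        gcongr
        exact Measure.restrict_le_self
  · simp only [Gdiv, if_neg h, le_top]

theorem rnDeriv_cond [SigmaFinite μ] (hS : MeasurableSet S) :
    (ProbabilityTheory.cond μ S).rnDeriv μ =ᵐ[μ] S.indicator fun _ => (μ S)⁻¹ := by
  have hdensity : ProbabilityTheory.cond μ S = μ.withDensity (S.indicator fun _ => (μ S)⁻¹) := by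
    rw [withDensity_indicator hS, withDensity_const, ProbabilityTheory.cond]
  rw [hdensity]
  exact Measure.rnDeriv_withDensity μ (measurable_const.indicator hS)

theorem Gdiv_cond [SigmaFinite μ] (hS : MeasurableSet S) (h0 : μ S ≠ 0) (htop : μ S ≠ ∞) :
    Gdiv (ProbabilityTheory.cond μ S) μ = (μ S)⁻¹ := by
  have hac : ProbabilityTheory.cond μ S ≪ μ := ProbabilityTheory.cond_absolutelyContinuous
  rw [Gdiv, if_pos hac, lintegral_congr_ae (hac.ae_le (rnDeriv_cond hS)),
    lintegral_indicator_const hS, ProbabilityTheory.cond_apply_self h0 htop, mul_one]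

end Gdiv

section Sources

theorem eventually_ne_zero_of_limsup_inv_ne_top {ι : Type*} {l : Filter ι} {u : ι → ℝ≥0∞}
    (h : limsup (fun i => (u i)⁻¹) l ≠ ∞) : ∀ᶠ i in l, u i ≠ 0 :=
  (eventually_lt_of_limsup_lt h.lt_top).mono fun _ hi => ENNReal.inv_ne_top.1 hi.ne

variable {Ω : ℕ → Type} [∀ n, MeasurableSpace (Ω n)] {ν μ : ∀ n, Measure (Ω n)}
  {S : ∀ n, Set (Ω n)}

theorem limsup_inv_measure_le_Gu [∀ n, (ν n).HaveLebesgueDecomposition (μ n)]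
    (hS : ∀ n, MeasurableSet (S n)) (hν : Tendsto (fun n => ν n (S n)) atTop (𝓝 1)) :
    limsup (fun n => (μ n (S n))⁻¹) atTop ≤ Gu ν μ := by
  have hsq : liminf (fun n => ν n (S n) ^ 2) atTop = 1 := by
    simpa only [one_pow] using (ENNReal.Tendsto.pow (n := 2) hν).liminf_eq
  calc limsup (fun n => (μ n (S n))⁻¹) atTop
      = limsup (fun n => (μ n (S n))⁻¹) atTop * liminf (fun n => ν n (S n) ^ 2) atTop := by
        rw [hsq, mul_one]
    _ ≤ limsup ((fun n => (μ n (S n))⁻¹) * fun n => ν n (S n) ^ 2) atTop :=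
        ENNReal.le_limsup_mul
    _ ≤ Gu ν μ := limsup_le_limsup <| .of_forall fun n => by
        simpa only [Pi.mul_apply, div_eq_mul_inv, mul_comm] using sq_measure_div_le_Gdiv (hS n)

open Classical in
/-- The source `μ` conditioned on the events `S`, which attains equality in
`limsup_inv_measure_le_Gu` when the left-hand side is finite. Where `μ n (S n) = 0` it keeps `μ n`,
so as to be a probability measure for every `n`. -/
def condSource (μ : ∀ n, Measure (Ω n)) (S : ∀ n, Set (Ω n)) (n : ℕ) : Measure (Ω n) :=
  if μ n (S n) = 0 then μ n else ProbabilityTheory.cond (μ n) (S n)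

theorem condSource_of_ne_zero {n : ℕ} (h0 : μ n (S n) ≠ 0) :
    condSource μ S n = ProbabilityTheory.cond (μ n) (S n) :=
  if_neg h0

instance isProbabilityMeasure_condSource [∀ n, IsProbabilityMeasure (μ n)] (n : ℕ) :
    IsProbabilityMeasure (condSource μ S n) := by
  unfold condSource
  split_ifs with h0
  · infer_instance
  · exact ProbabilityTheory.cond_isProbabilityMeasure h0

variable [∀ n, IsFiniteMeasure (μ n)]

theorem tendsto_condSource (hfin : limsup (fun n => (μ n (S n))⁻¹) atTop ≠ ∞) :
    Tendsto (fun n => condSource μ S n (S n)) atTop (𝓝 1) := by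
  refine tendsto_const_nhds.congr' ?_
  filter_upwards [eventually_ne_zero_of_limsup_inv_ne_top hfin] with n h0
  rw [condSource_of_ne_zero h0, ProbabilityTheory.cond_apply_self h0 (measure_ne_top _ _)]

theorem Gu_condSource (hS : ∀ n, MeasurableSet (S n))
    (hfin : limsup (fun n => (μ n (S n))⁻¹) atTop ≠ ∞) :
    Gu (condSource μ S) μ = limsup (fun n => (μ n (S n))⁻¹) atTop := by
  refine limsup_congr ?_
  filter_upwards [eventually_ne_zero_of_limsup_inv_ne_top hfin] with n h0
  rw [condSource_of_ne_zero h0, Gdiv_cond (hS n) h0 (measure_ne_top _ _)]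

end Sources

theorem statement4
    (Ω : ℕ → Type) [∀ n, MeasurableSpace (Ω n)]
    (C : ℕ → Type) [∀ n, Nonempty (C n)]
    (size : ∀ n, C n → ℝ) (hsize : ∀ n (c : C n), 1 ≤ size n c)
    (T : ∀ n, C n → Set (Ω n)) (hT : ∀ n (c : C n), MeasurableSet (T n c))
    (μ : ∀ n, Measure (Ω n)) (hμ : ∀ n, IsProbabilityMeasure (μ n))
    (R : ℝ)
    (hne : epsC size T μ R ≠ 1) :
    (1 - epsC size T μ R)⁻¹ =
      ⨅ (ν : ∀ n, Measure (Ω n)) (_ : ∀ n, IsProbabilityMeasure (ν n))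
        (_ : RC size T ν ≤ (R : EReal)), Gu ν μ := by
  rw [inv_one_sub_epsC size hT μ R]
  apply le_antisymm
  · refine le_iInf₂ fun ν hν => le_iInf fun hR => ?_
    obtain ⟨c, hlim, hrate⟩ := exists_rate_eq_RC (hR.trans_lt (EReal.coe_lt_top R)).ne
    exact (iInf₂_le c (hrate.trans_le hR)).trans
      (limsup_inv_measure_le_Gu (fun n => hT n (c n)) hlim)
  · refine le_iInf₂ fun c hc => ?_
    let S : ∀ n, Set (Ω n) := fun n => T n (c n)
    change _ ≤ limsup (fun n => (μ n (S n))⁻¹) atTop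
    obtain htop | hfin := eq_or_ne (limsup (fun n => (μ n (S n))⁻¹) atTop) ∞
    · exact htop ▸ le_top
    · have hR : RC size T (condSource μ S) ≤ (R : EReal) :=
        (iInf₂_le c (tendsto_condSource hfin)).trans hc
      rw [← Gu_condSource (fun n => hT n (c n)) hfin]
      exact iInf₂_le_of_le (condSource μ S) inferInstance (iInf_le _ hR)

end
end

section
/- For any source μ, any real numbers R and s, and any sequence (k_n) of nonnegative integers with k_n ≤ n^s for all n, the single-code and multi-code low-rate reliability functions coincide: ρ*_C(R|μ) = ρ*_C(R|μ; (k_n)). -/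
open MeasureTheory Filter Topology
open scoped ENNReal

noncomputable section

/-- `ρ*_C(R|μ)`: infimum over code sequences of rate at most `R` of
`limsup (1/n) log (1/μ_n(T_n(c_n)))`. -/
def rhoStarC {Ω : ℕ → Type} [∀ n, MeasurableSpace (Ω n)] {C : ℕ → Type}
    (size : ∀ n, C n → ℝ) (T : ∀ n, C n → Set (Ω n)) (μ : ∀ n, Measure (Ω n)) (R : ℝ) :
    EReal :=
  ⨅ (c : ∀ n, C n) (_ : rate size c ≤ (R : EReal)),
    Filter.limsup
      (fun n : ℕ => (((n : ℝ)⁻¹ : ℝ) : EReal) * ENNReal.log (μ n (T n (c n)))⁻¹)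
      Filter.atTop

/-- Rate of a multi-code sequence: `limsup (1/n) log (max_i ‖c_{i,n}‖)`. -/
def rateMulti {C : ℕ → Type} (k : ℕ → ℕ) (size : ∀ n, C n → ℝ)
    (c : ∀ n, Fin (k n + 1) → C n) : EReal :=
  Filter.limsup
    (fun n : ℕ => (((n : ℝ)⁻¹ * Real.log (⨆ i, size n (c n i)) : ℝ) : EReal)) Filter.atTop

/-- `ρ*_C(R|μ;(k_n))`: infimum over multi-code sequences of rate at most `R` of
`limsup (1/n) log (1/μ_n(⋃_i T_n(c_{i,n})))`. -/
def rhoStarCMulti {Ω : ℕ → Type} [∀ n, MeasurableSpace (Ω n)] {C : ℕ → Type} (k : ℕ → ℕ)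
    (size : ∀ n, C n → ℝ) (T : ∀ n, C n → Set (Ω n)) (μ : ∀ n, Measure (Ω n)) (R : ℝ) :
    EReal :=
  ⨅ (c : ∀ n, Fin (k n + 1) → C n) (_ : rateMulti k size c ≤ (R : EReal)),
    Filter.limsup
      (fun n : ℕ => (((n : ℝ)⁻¹ : ℝ) : EReal) * ENNReal.log (μ n (⋃ i, T n (c n i)))⁻¹)
      Filter.atTop

/-
Among the `k_n + 1` codes of a multi-code at time `n`, one has a set `T_n(c_{i,n})` carrying at
least the fraction `1 / (k_n + 1)` of the measure of the union. Selecting it costs at most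
`(1/n) log (k_n + 1)` in the exponent, which vanishes in the limit as soon as `k_n` grows
subexponentially.
-/

section

open Asymptotics

theorem isLittleO_log_norm_add_one_of_isBigO_rpow {α E : Type*} [SeminormedAddCommGroup E]
    {l : Filter α} {f : α → E} {g : α → ℝ} {s : ℝ} (hg : Tendsto g l atTop)
    (hf : f =O[l] fun x => g x ^ s) :
    (fun x => Real.log (‖f x‖ + 1)) =o[l] g := by
  refine isLittleO_iff.2 fun ε hε => ?_
  have f_isLittleO : f =o[l] fun x => Real.exp (ε * g x) :=
    hf.trans_isLittleO ((isLittleO_rpow_exp_pos_mul_atTop s hε).comp_tendsto hg)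
  have one_isLittleO : (fun _ => (1 : ℝ)) =o[l] fun x => Real.exp (ε * g x) :=
    (isLittleO_one_left_iff ℝ).2 <|
      tendsto_norm_atTop_atTop.comp (Real.tendsto_exp_atTop.comp (hg.const_mul_atTop hε))
  filter_upwards [(f_isLittleO.norm_left.add one_isLittleO).bound one_pos] with x hx
  have hpos : 0 < ‖f x‖ + 1 := by positivity
  have le_exp : ‖f x‖ + 1 ≤ Real.exp (ε * g x) := by
    simpa only [one_mul, Real.norm_of_nonneg hpos.le, Real.norm_eq_abs, Real.abs_exp] using hx
  calc ‖Real.log (‖f x‖ + 1)‖ = Real.log (‖f x‖ + 1) :=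
        Real.norm_of_nonneg (Real.log_nonneg (le_add_of_nonneg_left (norm_nonneg _)))
    _ ≤ ε * g x := (Real.log_le_iff_le_exp hpos).2 le_exp
    _ ≤ ε * ‖g x‖ := by gcongr; exact Real.le_norm_self _

theorem isLittleO_log_natCast_add_one_of_isBigO_rpow {k : ℕ → ℕ} {s : ℝ}
    (hk : (fun n => (k n : ℝ)) =O[atTop] fun n : ℕ => (n : ℝ) ^ s) :
    (fun n => Real.log (k n + 1)) =o[atTop] fun n : ℕ => (n : ℝ) := by
  simpa only [Real.norm_natCast] using
    isLittleO_log_norm_add_one_of_isBigO_rpow tendsto_natCast_atTop_atTop hk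

theorem limsup_add_le_of_tendsto_zero {α : Type*} {l : Filter α} [l.NeBot] (u : α → EReal)
    {v : α → EReal} (hv : Tendsto v l (𝓝 0)) : limsup (u + v) l ≤ limsup u l := by
  have limsup_v : limsup v l = 0 := hv.limsup_eq
  calc limsup (u + v) l ≤ limsup u l + limsup v l :=
        EReal.limsup_add_le (.inr (by simp [limsup_v])) (.inr (by simp [limsup_v]))
    _ = limsup u l := by rw [limsup_v, add_zero]

theorem exists_measure_iUnion_le_card_mul {Ω ι : Type*} [MeasurableSpace Ω] [Fintype ι]
    [Nonempty ι] (μ : Measure Ω) (A : ι → Set Ω) :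
    ∃ i, μ (⋃ j, A j) ≤ Fintype.card ι * μ (A i) := by
  obtain ⟨i, hi⟩ := Finite.exists_max fun j => μ (A j)
  refine ⟨i, (measure_iUnion_fintype_le μ A).trans ?_⟩
  simpa only [Finset.card_univ, nsmul_eq_mul] using
    Finset.sum_le_card_nsmul Finset.univ (fun j => μ (A j)) _ fun j _ => hi j

theorem exists_log_inv_measure_le {Ω ι : Type*} [MeasurableSpace Ω] [Fintype ι] [Nonempty ι]
    (μ : Measure Ω) (A : ι → Set Ω) :
    ∃ i, ENNReal.log (μ (A i))⁻¹ ≤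
      ENNReal.log (μ (⋃ j, A j))⁻¹ + (Real.log (Fintype.card ι) : ℝ) := by
  obtain ⟨i, hi⟩ := exists_measure_iUnion_le_card_mul μ A
  have card_ne_zero : (Fintype.card ι : ℝ≥0∞) ≠ 0 := by simp
  have card_ne_top : (Fintype.card ι : ℝ≥0∞) ≠ ⊤ := ENNReal.natCast_ne_top _
  have log_card : ENNReal.log (Fintype.card ι) = (Real.log (Fintype.card ι) : ℝ) := by
    rw [← ENNReal.ofReal_natCast,
      ENNReal.log_ofReal_of_pos (Nat.cast_pos.2 Fintype.card_pos)]
  refine ⟨i, ?_⟩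
  rw [← log_card, ← ENNReal.log_mul_add]
  refine ENNReal.log_monotone ?_
  rw [← ENNReal.div_eq_inv_mul, ENNReal.inv_le_iff_inv_le,
    ENNReal.inv_div (.inr card_ne_top) (.inr card_ne_zero)]
  exact ENNReal.div_le_of_le_mul' hi

variable {C : ℕ → Type} {size : ∀ n, C n → ℝ} {k : ℕ → ℕ}

theorem rate_select_le_rateMulti (hsize : ∀ n c, 0 < size n c) (c : ∀ n, Fin (k n + 1) → C n)
    (i : ∀ n, Fin (k n + 1)) : rate size (fun n => c n (i n)) ≤ rateMulti k size c := by
  refine limsup_le_limsup (Eventually.of_forall fun n => EReal.coe_le_coe_iff.2 ?_)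
  have size_le_max : size n (c n (i n)) ≤ ⨆ j, size n (c n j) :=
    le_ciSup (f := fun j => size n (c n j)) (Set.finite_range _).bddAbove (i n)
  gcongr
  exact hsize n _

theorem rateMulti_const (c : ∀ n, C n) : rateMulti k size (fun n _ => c n) = rate size c := by
  simp only [rateMulti, rate, ciSup_const]

variable {Ω : ℕ → Type} [∀ n, MeasurableSpace (Ω n)] {T : ∀ n, C n → Set (Ω n)}
  {μ : ∀ n, Measure (Ω n)} {R : ℝ}

theorem rhoStarCMulti_le_rhoStarC : rhoStarCMulti k size T μ R ≤ rhoStarC size T μ R := by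
  refine le_iInf₂ fun c hc => iInf₂_le_of_le (fun n _ => c n) ?_ ?_
  · rwa [rateMulti_const]
  · simp only [Set.iUnion_const, le_refl]

theorem rhoStarC_le_rhoStarCMulti (hsize : ∀ n c, 0 < size n c)
    (hk : (fun n => Real.log (k n + 1)) =o[atTop] fun n : ℕ => (n : ℝ)) :
    rhoStarC size T μ R ≤ rhoStarCMulti k size T μ R := by
  refine le_iInf₂ fun c hc => ?_
  choose i hi using fun n => exists_log_inv_measure_le (μ n) fun j => T n (c n j)
  refine iInf₂_le_of_le (fun n => c n (i n)) ((rate_select_le_rateMulti hsize c i).trans hc) ?_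
  have loss_tendsto_zero :
      Tendsto (fun n : ℕ => (((n : ℝ)⁻¹ * Real.log (k n + 1) : ℝ) : EReal)) atTop (𝓝 0) := by
    have real_tendsto := hk.tendsto_div_nhds_zero
    simp only [div_eq_inv_mul] at real_tendsto
    exact (continuous_coe_real_ereal.tendsto 0).comp real_tendsto
  refine le_trans (limsup_le_limsup (Eventually.of_forall fun n => ?_))
    (limsup_add_le_of_tendsto_zero _ loss_tendsto_zero)
  have inv_nonneg : (0 : EReal) ≤ ((n : ℝ)⁻¹ : ℝ) := EReal.coe_nonneg.2 (by positivity)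
  calc (((n : ℝ)⁻¹ : ℝ) : EReal) * ENNReal.log (μ n (T n (c n (i n))))⁻¹
      ≤ ((n : ℝ)⁻¹ : ℝ) *
          (ENNReal.log (μ n (⋃ j, T n (c n j)))⁻¹ + (Real.log (k n + 1) : ℝ)) :=
        mul_le_mul_of_nonneg_left (by simpa using hi n) inv_nonneg
    _ = ((n : ℝ)⁻¹ : ℝ) * ENNReal.log (μ n (⋃ j, T n (c n j)))⁻¹ +
          ((n : ℝ)⁻¹ * Real.log (k n + 1) : ℝ) := by
        rw [EReal.left_distrib_of_nonneg_of_ne_top inv_nonneg (EReal.coe_ne_top _), EReal.coe_mul]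

theorem statement7_general (hsize : ∀ n c, 0 < size n c)
    (hk : (fun n => Real.log (k n + 1)) =o[atTop] fun n : ℕ => (n : ℝ)) :
    rhoStarC size T μ R = rhoStarCMulti k size T μ R :=
  (rhoStarC_le_rhoStarCMulti hsize hk).antisymm rhoStarCMulti_le_rhoStarC

end

theorem statement7
    (Ω : ℕ → Type) [∀ n, MeasurableSpace (Ω n)]
    (C : ℕ → Type) [∀ n, Nonempty (C n)]
    (size : ∀ n, C n → ℝ) (hsize : ∀ n (c : C n), 1 ≤ size n c)
    (T : ∀ n, C n → Set (Ω n)) (hT : ∀ n (c : C n), MeasurableSet (T n c))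
    (μ : ∀ n, Measure (Ω n)) (hμ : ∀ n, IsProbabilityMeasure (μ n))
    (R s : ℝ) (k : ℕ → ℕ) (hk : ∀ n : ℕ, (k n : ℝ) ≤ (n : ℝ) ^ s) :
    rhoStarC size T μ R = rhoStarCMulti k size T μ R :=
  statement7_general (fun n c => one_pos.trans_le (hsize n c))
    (isLittleO_log_natCast_add_one_of_isBigO_rpow <|
      .of_norm_le fun n => (Real.norm_natCast _).trans_le (hk n))

end
end

section
/- For a ∈ [0,1] and a probability measure ν on Ω_n, define R_n^a(ν) = inf{ (1/n) log ‖c‖ : c ∈ C_n, ν((T_n(c))ᶜ) ≤ 1 − a } (inf ∅ = +∞). Let (a_n) be a sequence of numbers in [0,1] with lim_n a_n = 0, let u = (u_n) and v = (v_n) be sources, let I be a set of positive integers, and define the source w = (w_n) by w_n = v_n if n ∈ I and w_n = u_n if n ∉ I. Then R*_C(w) ≥ min{ R*_C(u), liminf_{n→∞, n∈I} R_n^{a_n}(v_n) }, where the liminf is taken along the filter of cofinite subsets of I (equal to +∞ if I is finite). -/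
open MeasureTheory Filter Topology
open scoped ENNReal

noncomputable section

/-- `R*_C(ν)`: infimum of rates of code sequences whose error probability under `ν`
has liminf smaller than one. -/
def RStarC {Ω : ℕ → Type} [∀ n, MeasurableSpace (Ω n)] {C : ℕ → Type}
    (size : ∀ n, C n → ℝ) (T : ∀ n, C n → Set (Ω n)) (ν : ∀ n, Measure (Ω n)) : EReal :=
  ⨅ (c : ∀ n, C n)
    (_ : Filter.liminf (fun n => ν n (T n (c n))ᶜ) Filter.atTop < 1),
    rate size c

/-- `R_n^a(ν) = inf { (1/n) log ‖c‖ : c ∈ C_n, ν((T_n(c))ᶜ) ≤ 1 − a }`. -/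
def Rna {Ω : ℕ → Type} [∀ n, MeasurableSpace (Ω n)] {C : ℕ → Type}
    (size : ∀ n, C n → ℝ) (T : ∀ n, C n → Set (Ω n)) (a : ℝ) (n : ℕ) (ν : Measure (Ω n)) :
    EReal :=
  ⨅ (c : C n) (_ : ν (T n c)ᶜ ≤ ENNReal.ofReal (1 - a)),
    (((n : ℝ)⁻¹ * Real.log (size n c) : ℝ) : EReal)

/-!
An error probability whose `liminf` over all `n` is below one already has `liminf` below one along
`I` or along `Iᶜ`. Off `I`, the code sequence competes in the infimum defining `R*_C(u)`. Along `I`,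
since `1 - a_n → 1`, it meets the constraint defining `R_n^{a_n}(v_n)` for infinitely many `n`.
-/

theorem liminf_eq_inf_of_eqOn_of_eqOn_compl {α β : Type*} [CompleteDistribLattice β]
    {l : Filter α} {s : Set α} {f g h : α → β} (hg : s.EqOn f g) (hh : sᶜ.EqOn f h) :
    liminf f l = liminf g (l ⊓ 𝓟 s) ⊓ liminf h (l ⊓ 𝓟 sᶜ) := by
  have hfg : liminf f (l ⊓ 𝓟 s) = liminf g (l ⊓ 𝓟 s) :=
    liminf_congr (eventually_inf_principal.2 (.of_forall hg))
  have hfh : liminf f (l ⊓ 𝓟 sᶜ) = liminf h (l ⊓ 𝓟 sᶜ) :=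
    liminf_congr (eventually_inf_principal.2 (.of_forall hh))
  rw [← hfg, ← hfh, ← liminf_sup_filter, ← inf_sup_left, (isCompl_principal s).sup_eq_top,
    inf_top_eq]

theorem frequently_lt_of_liminf_lt_liminf {α β : Type*} [CompleteLinearOrder β]
    {l : Filter α} {f g : α → β} (h : liminf f l < liminf g l) : ∃ᶠ x in l, f x < g x := by
  contrapose! h
  exact liminf_le_liminf h

theorem tendsto_ofReal_one_sub {α : Type*} {l : Filter α} {a : α → ℝ}
    (ha : Tendsto a l (𝓝 0)) : Tendsto (fun x => ENNReal.ofReal (1 - a x)) l (𝓝 1) := by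
  simpa only [sub_zero, ENNReal.ofReal_one] using ENNReal.tendsto_ofReal (ha.const_sub 1)

section

variable {Ω : ℕ → Type} [∀ n, MeasurableSpace (Ω n)] {C : ℕ → Type}
  {size : ∀ n, C n → ℝ} {T : ∀ n, C n → Set (Ω n)}

theorem RStarC_le_rate {ν : ∀ n, Measure (Ω n)} {c : ∀ n, C n}
    (hc : liminf (fun n => ν n (T n (c n))ᶜ) atTop < 1) : RStarC size T ν ≤ rate size c :=
  iInf₂_le c hc

theorem Rna_le {a : ℝ} {n : ℕ} {ν : Measure (Ω n)} {c : C n}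
    (hc : ν (T n c)ᶜ ≤ ENNReal.ofReal (1 - a)) :
    Rna size T a n ν ≤ (((n : ℝ)⁻¹ * Real.log (size n c) : ℝ) : EReal) :=
  iInf₂_le c hc

theorem liminf_Rna_le_rate {l : Filter ℕ} (hl : l ≤ atTop) {a : ℕ → ℝ} (ha : Tendsto a l (𝓝 0))
    {ν : ∀ n, Measure (Ω n)} {c : ∀ n, C n} (hc : liminf (fun n => ν n (T n (c n))ᶜ) l < 1) :
    liminf (fun n => Rna size T (a n) n (ν n)) l ≤ rate size c := by
  obtain rfl | _ := l.eq_or_neBot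
  · simp only [liminf_bot, not_top_lt] at hc
  have admissible : ∃ᶠ n in l, ν n (T n (c n))ᶜ < ENNReal.ofReal (1 - a n) :=
    frequently_lt_of_liminf_lt_liminf (hc.trans_eq (tendsto_ofReal_one_sub ha).liminf_eq.symm)
  calc liminf (fun n => Rna size T (a n) n (ν n)) l
      ≤ limsup (fun n : ℕ => (((n : ℝ)⁻¹ * Real.log (size n (c n)) : ℝ) : EReal)) l :=
        liminf_le_limsup_of_frequently_le (admissible.mono fun _ hn => Rna_le hn.le)
    _ ≤ rate size c := limsup_le_limsup_of_le hl

theorem statement14_general {a : ℕ → ℝ} {I : Set ℕ} (ha : Tendsto a (atTop ⊓ 𝓟 I) (𝓝 0))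
    {u v w : ∀ n, Measure (Ω n)} (hwI : ∀ n ∈ I, w n = v n) (hwI' : ∀ n, n ∉ I → w n = u n) :
    min (RStarC size T u) (liminf (fun n => Rna size T (a n) n (v n)) (atTop ⊓ 𝓟 I)) ≤
      RStarC size T w := by
  refine le_iInf₂ fun c hc => ?_
  have error_split : liminf (fun n => w n (T n (c n))ᶜ) atTop =
      liminf (fun n => v n (T n (c n))ᶜ) (atTop ⊓ 𝓟 I) ⊓
        liminf (fun n => u n (T n (c n))ᶜ) (atTop ⊓ 𝓟 Iᶜ) :=
    liminf_eq_inf_of_eqOn_of_eqOn_compl (fun n hn => by rw [hwI n hn])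
      (fun n hn => by rw [hwI' n hn])
  rw [error_split, inf_lt_iff] at hc
  rcases hc with hv | hu
  · exact (min_le_right _ _).trans (liminf_Rna_le_rate inf_le_left ha hv)
  · have hu_atTop : liminf (fun n => u n (T n (c n))ᶜ) atTop < 1 :=
      (liminf_le_liminf_of_le inf_le_left).trans_lt hu
    exact (min_le_left _ _).trans (RStarC_le_rate hu_atTop)

end

theorem statement14
    (Ω : ℕ → Type) [∀ n, MeasurableSpace (Ω n)]
    (C : ℕ → Type) [∀ n, Nonempty (C n)]
    (size : ∀ n, C n → ℝ) (hsize : ∀ n (c : C n), 1 ≤ size n c)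
    (T : ∀ n, C n → Set (Ω n)) (hT : ∀ n (c : C n), MeasurableSet (T n c))
    (μ : ∀ n, Measure (Ω n)) (hμ : ∀ n, IsProbabilityMeasure (μ n))
    (a : ℕ → ℝ) (ha01 : ∀ n, a n ∈ Set.Icc (0 : ℝ) 1)
    (ha : Filter.Tendsto a Filter.atTop (nhds 0))
    (u v : ∀ n, Measure (Ω n))
    (hu : ∀ n, IsProbabilityMeasure (u n)) (hv : ∀ n, IsProbabilityMeasure (v n))
    (I : Set ℕ) (w : ∀ n, Measure (Ω n))
    (hwI : ∀ n ∈ I, w n = v n) (hwI' : ∀ n, n ∉ I → w n = u n) :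
    min (RStarC size T u)
        (Filter.liminf (fun n => Rna size T (a n) n (v n))
          (Filter.atTop ⊓ Filter.principal I)) ≤ RStarC size T w :=
  statement14_general (ha.mono_left inf_le_left) hwI hwI'

end
end
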